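/- The four-dimensional metric ds² = 2 du [dr + ½(x r − x e^x − 2 κ₀ e^x c(u)²) du] + e^x (dx² + e^{2u} dy²), together with the null 2-form F = e^{x/2} c(u) du ∧ (−cos(y e^u / 2) dx + e^u sin(y e^u / 2) dy), is an exact solution of the Einstein–Maxwell equations (with vanishing cosmological constant) of Weyl type III; moreover it remains an exact solution of Einstein gravity coupled to any generalized electrodynamics with field equations dF = 0, *d*F̃ = 0 and energy-momentum tensor built from F and its covariant derivatives. -/

import Mathlib

open scoped BigOperators

noncomputable section

namespace VSI

/-! ### Basic setup: tensor fields on an `n`-dimensional coordinate chart -/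

/-- A point of an `n`-dimensional coordinate chart. -/
abbrev Pt (n : ℕ) := Fin n → ℝ

/-- A covariant tensor field of rank `k`, given by its components. -/
abbrev TensorField (n k : ℕ) := Pt n → (Fin k → Fin n) → ℝ

/-- A vector field, given by its components. -/
abbrev VecField (n : ℕ) := Pt n → Fin n → ℝ

/-- A field of `n × n` matrices (e.g. a metric). -/
abbrev MetricField (n : ℕ) := Pt n → Matrix (Fin n) (Fin n) ℝ

/-- Partial derivative of a scalar function along the `a`-th coordinate. -/
def pd {n : ℕ} (f : Pt n → ℝ) (a : Fin n) (x : Pt n) : ℝ :=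
  fderiv ℝ f x (Pi.single a 1)

/-- Partial derivative masked to the transverse directions (coordinates `≥ 2`). -/
def pdT {n : ℕ} (f : Pt n → ℝ) (a : Fin n) (x : Pt n) : ℝ :=
  if 2 ≤ (a : ℕ) then pd f a x else 0

/-- A function on the chart is independent of the coordinate `r` (coordinate number 1). -/
def IndepOfR {n : ℕ} {α : Type*} (f : Pt n → α) : Prop :=
  ∀ x x' : Pt n, (∀ i : Fin n, (i : ℕ) ≠ 1 → x i = x' i) → f x = f x'

/-- A smooth symmetric metric of Lorentzian signature `(-,+,…,+)`. -/
def IsLorentzMetric {n : ℕ} (g : MetricField n) : Prop :=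
  (∀ a b, ContDiff ℝ (⊤ : ℕ∞) fun x => g x a b) ∧ (∀ x, (g x).IsSymm) ∧
  (∀ x, ∃ P : Matrix (Fin n) (Fin n) ℝ, IsUnit P.det ∧
    P.transpose * g x * P = Matrix.diagonal fun i : Fin n => if (i : ℕ) = 0 then (-1 : ℝ) else 1)

/-- Metric pairing of two vectors at a point. -/
def gdot {n : ℕ} (g : MetricField n) (x : Pt n) (X Y : Fin n → ℝ) : ℝ :=
  ∑ a, ∑ b, g x a b * X a * Y b

/-- Index lowering of a vector field. -/
def lower {n : ℕ} (g : MetricField n) (ℓ : VecField n) (x : Pt n) (a : Fin n) : ℝ :=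
  ∑ b, g x a b * ℓ x b

/-- The 1-form (rank-1 covariant tensor field) associated with a vector field. -/
def lowerField {n : ℕ} (g : MetricField n) (ℓ : VecField n) : TensorField n 1 :=
  fun x idx => lower g ℓ x (idx 0)

/-- Christoffel symbols `Γ^a_{bc}` of the Levi-Civita connection of `g`. -/
def christoffel {n : ℕ} (g : MetricField n) (x : Pt n) (a b c : Fin n) : ℝ :=
  (1/2) * ∑ d, (g x)⁻¹ a d *
    (pd (fun y => g y d c) b x + pd (fun y => g y b d) c x - pd (fun y => g y b c) d x)

/-- Covariant derivative of a covariant tensor field; the new (derivative) index is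
the first index of the result. -/
def covD {n k : ℕ} (g : MetricField n) (T : TensorField n k) : TensorField n (k+1) :=
  fun x idx =>
    pd (fun y => T y fun m => idx m.succ) (idx 0) x
    - ∑ m : Fin k, ∑ e : Fin n,
        christoffel g x e (idx 0) (idx m.succ) * T x (Function.update (fun m' => idx m'.succ) m e)

/-- Iterated covariant derivative. -/
def covDIter {n k : ℕ} (g : MetricField n) (T : TensorField n k) : (I : ℕ) → TensorField n (k + I)
  | 0 => T
  | I + 1 => covD g (covDIter g T I)

/-! ### Scalar polynomial invariants and tensor concomitants -/

/-- A scheme describing a polynomial concomitant of a rank-`k` tensor field: a full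
metric contraction of a tensor product of covariant derivatives (of orders `ord j`)
of the field, with `r` free indices left over.  `m` is the number of contracted
index pairs; `slots` enumerates all index slots of the tensor product. -/
structure ConcomScheme (k r : ℕ) where
  N : ℕ
  hN : 0 < N
  ord : Fin N → ℕ
  m : ℕ
  slots : ((Fin m × Bool) ⊕ Fin r) ≃ (Σ j : Fin N, Fin (k + ord j))

/-- The value of a concomitant scheme: all contracted index pairs are contracted with
the inverse metric. -/
def ConcomScheme.value {k r : ℕ} (S : ConcomScheme k r) {n : ℕ} (g : MetricField n)
    (T : TensorField n k) : TensorField n r := fun x free =>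
  ∑ φ : Fin S.m × Bool → Fin n,
    (∏ i : Fin S.m, (g x)⁻¹ (φ (i, false)) (φ (i, true))) *
    ∏ j : Fin S.N, covDIter g T (S.ord j) x
      (fun s => Sum.elim φ free (S.slots.symm ⟨j, s⟩))

/-- All scalar polynomial invariants constructed from `T` and its covariant
derivatives up to order `I` vanish. -/
def IsVSIUpTo {n k : ℕ} (g : MetricField n) (T : TensorField n k) (I : ℕ) : Prop :=
  ∀ S : ConcomScheme k 0, (∀ j, S.ord j ≤ I) → ∀ x v, S.value g T x v = 0

/-- All scalar polynomial invariants of arbitrary order vanish. -/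
def IsVSI {n k : ℕ} (g : MetricField n) (T : TensorField n k) : Prop :=
  ∀ I : ℕ, IsVSIUpTo g T I

/-- All zeroth order scalar polynomial invariants of `T` vanish at the point `x`. -/
def IsVSI0At {n k : ℕ} (g : MetricField n) (T : TensorField n k) (x : Pt n) : Prop :=
  ∀ S : ConcomScheme k 0, (∀ j, S.ord j = 0) → ∀ v, S.value g T x v = 0

/-- A rank-`r` tensor field `G` is (polynomially) constructed from `T`, its covariant
derivatives of arbitrary order and the metric. -/
def IsConstructedFrom {n k r : ℕ} (g : MetricField n) (T : TensorField n k)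
    (G : TensorField n r) : Prop :=
  G ∈ Submodule.span ℝ {G' : TensorField n r | ∃ S : ConcomScheme k r, G' = S.value g T}

/-- A symmetric-2-tensor "correction" to the standard electromagnetic energy-momentum
tensor: constructed from `T` and its covariant derivatives, where each monomial either
contains at least three factors of the field or at least one covariant derivative
(i.e. it comes from a non-Maxwellian term of a generalized electrodynamics). -/
def IsCorrectionTensor {n k : ℕ} (g : MetricField n) (T : TensorField n k)
    (Tc : TensorField n 2) : Prop :=
  Tc ∈ Submodule.span ℝ {G : TensorField n 2 |
    ∃ S : ConcomScheme k 2, (3 ≤ S.N ∨ ∃ j, 1 ≤ S.ord j) ∧ G = S.value g T}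

/-! ### p-forms, type N, Lie derivative -/

def IsAlternating {n k : ℕ} (T : TensorField n k) : Prop :=
  ∀ (x : Pt n) (idx : Fin k → Fin n) (σ : Equiv.Perm (Fin k)),
    T x (idx ∘ σ) = ((Equiv.Perm.sign σ : ℤ) : ℝ) * T x idx

def IsSmoothT {n k : ℕ} (T : TensorField n k) : Prop :=
  ∀ idx, ContDiff ℝ (⊤ : ℕ∞) fun x => T x idx

/-- A smooth differential form (totally antisymmetric covariant tensor field). -/
def IsFormField {n k : ℕ} (T : TensorField n k) : Prop :=
  IsSmoothT T ∧ IsAlternating T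

def IsSmoothVec {n : ℕ} (ℓ : VecField n) : Prop :=
  ∀ a, ContDiff ℝ (⊤ : ℕ∞) fun x => ℓ x a

/-- A (nowhere vanishing, smooth) null vector field. -/
def IsNullField {n : ℕ} (g : MetricField n) (ℓ : VecField n) : Prop :=
  IsSmoothVec ℓ ∧ (∀ x, ℓ x ≠ 0) ∧ ∀ x, gdot g x (ℓ x) (ℓ x) = 0

/-- `ℓ^a F_{a b₁ … b_{p-1}} = 0`. -/
def ContractsFirstZero {n p : ℕ} [NeZero p] (ℓ : VecField n) (F : TensorField n p) : Prop :=
  ∀ (x : Pt n) (v : Fin p → Fin n), (∑ a, ℓ x a * F x (Function.update v 0 a)) = 0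

/-- `ℓ_{[a} F_{b₁ … b_p]} = 0`. -/
def WedgeWithZero {n p : ℕ} (g : MetricField n) (ℓ : VecField n) (F : TensorField n p) : Prop :=
  ∀ (x : Pt n) (idx : Fin (p+1) → Fin n),
    (∑ σ : Equiv.Perm (Fin (p+1)), ((Equiv.Perm.sign σ : ℤ) : ℝ) *
      (lower g ℓ x (idx (σ 0)) * F x (fun m => idx (σ m.succ)))) = 0

/-- The `p`-form `F` is of type N with multiple null direction `ℓ`. -/
def IsTypeN {n p : ℕ} [NeZero p] (g : MetricField n) (F : TensorField n p)
    (ℓ : VecField n) : Prop :=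
  IsNullField g ℓ ∧ ContractsFirstZero ℓ F ∧ WedgeWithZero g ℓ F

/-- Lie derivative of a covariant tensor field along a vector field. -/
def lieD {n k : ℕ} (ℓ : VecField n) (T : TensorField n k) : TensorField n k :=
  fun x idx =>
    (∑ a, ℓ x a * pd (fun y => T y idx) a x)
    + ∑ m : Fin k, ∑ a, pd (fun y => ℓ y a) (idx m) x * T x (Function.update idx m a)

/-! ### Optical properties: geodesic, Kundt -/

/-- `∇_b ℓ_a` (first index is the derivative index). -/
def nablaLow {n : ℕ} (g : MetricField n) (ℓ : VecField n) (x : Pt n) (b a : Fin n) : ℝ :=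
  covD g (lowerField g ℓ) x ![b, a]

/-- `ℓ` is geodesic: `ℓ^b ∇_b ℓ_a ∝ ℓ_a`. -/
def IsGeodesicField {n : ℕ} (g : MetricField n) (ℓ : VecField n) : Prop :=
  ∀ x, ∃ c : ℝ, ∀ a, (∑ b, ℓ x b * nablaLow g ℓ x b a) = c * lower g ℓ x a

/-- `ℓ` is affinely parameterized: `ℓ^b ∇_b ℓ_a = 0`. -/
def IsAffinelyParam {n : ℕ} (g : MetricField n) (ℓ : VecField n) : Prop :=
  ∀ x a, (∑ b, ℓ x b * nablaLow g ℓ x b a) = 0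

/-- `ℓ` is a Kundt null vector field: null, geodesic and with vanishing optical matrix
(expansion-free, shear-free and twist-free). -/
def IsKundt {n : ℕ} (g : MetricField n) (ℓ : VecField n) : Prop :=
  IsNullField g ℓ ∧ IsGeodesicField g ℓ ∧
  ∀ (x : Pt n) (X Y : Fin n → ℝ), gdot g x X (ℓ x) = 0 → gdot g x Y (ℓ x) = 0 →
    (∑ a, ∑ b, X a * Y b * nablaLow g ℓ x b a) = 0

/-! ### Curvature -/

/-- Fully lowered Riemann tensor `R_{abcd}`. -/
def riemann {n : ℕ} (g : MetricField n) : TensorField n 4 := fun x idx =>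
  ∑ e, g x (idx 0) e *
    (pd (fun y => christoffel g y e (idx 3) (idx 1)) (idx 2) x
     - pd (fun y => christoffel g y e (idx 2) (idx 1)) (idx 3) x
     + ∑ f', (christoffel g x e (idx 2) f' * christoffel g x f' (idx 3) (idx 1)
            - christoffel g x e (idx 3) f' * christoffel g x f' (idx 2) (idx 1)))

def ricci {n : ℕ} (g : MetricField n) (x : Pt n) (b d : Fin n) : ℝ :=
  ∑ a, ∑ c, (g x)⁻¹ a c * riemann g x ![a, b, c, d]

def ricciScalar {n : ℕ} (g : MetricField n) (x : Pt n) : ℝ :=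
  ∑ b, ∑ d, (g x)⁻¹ b d * ricci g x b d

def tracelessRicci {n : ℕ} (g : MetricField n) : TensorField n 2 := fun x idx =>
  ricci g x (idx 0) (idx 1) - ricciScalar g x / (n : ℝ) * g x (idx 0) (idx 1)

/-- Weyl tensor `C_{abcd}` (for `n ≥ 3`). -/
def weyl {n : ℕ} (g : MetricField n) : TensorField n 4 := fun x idx =>
  riemann g x idx
  - (1 / ((n : ℝ) - 2)) *
      (g x (idx 0) (idx 2) * ricci g x (idx 3) (idx 1)
       - g x (idx 0) (idx 3) * ricci g x (idx 2) (idx 1)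
       - g x (idx 1) (idx 2) * ricci g x (idx 3) (idx 0)
       + g x (idx 1) (idx 3) * ricci g x (idx 2) (idx 0))
  + (1 / (((n : ℝ) - 1) * ((n : ℝ) - 2))) * ricciScalar g x *
      (g x (idx 0) (idx 2) * g x (idx 3) (idx 1) - g x (idx 0) (idx 3) * g x (idx 2) (idx 1))

/-! ### Null frames, boost weights, algebraic types -/

/-- A null frame at a point: two null vectors `e 0 = ℓ`, `e 1 = n` with `ℓ·n = 1`, and
orthonormal spacelike vectors `e i`, `i ≥ 2`, orthogonal to both. -/
structure NullFrameAt {n : ℕ} [NeZero n] (g : MetricField n) (x : Pt n) where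
  e : Fin n → Fin n → ℝ
  h00 : gdot g x (e 0) (e 0) = 0
  h11 : gdot g x (e 1) (e 1) = 0
  h01 : gdot g x (e 0) (e 1) = 1
  h0i : ∀ i : Fin n, 2 ≤ (i : ℕ) → gdot g x (e 0) (e i) = 0
  h1i : ∀ i : Fin n, 2 ≤ (i : ℕ) → gdot g x (e 1) (e i) = 0
  hij : ∀ i j : Fin n, 2 ≤ (i : ℕ) → 2 ≤ (j : ℕ) →
    gdot g x (e i) (e j) = (if i = j then 1 else 0)

/-- Boost weight of a frame multi-index: `+1` for each contraction with `ℓ = e 0`,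
`-1` for each contraction with `n = e 1`. -/
def bw {n k : ℕ} (a : Fin k → Fin n) : ℤ :=
  ((Finset.univ.filter fun m => (a m : ℕ) = 0).card : ℤ)
  - ((Finset.univ.filter fun m => (a m : ℕ) = 1).card : ℤ)

/-- Frame components of a covariant tensor. -/
def frameComp {n k : ℕ} (T : TensorField n k) (e : Fin n → Fin n → ℝ) (x : Pt n)
    (a : Fin k → Fin n) : ℝ :=
  ∑ idx : Fin k → Fin n, T x idx * ∏ m, e (a m) (idx m)

/-- The tensor field `T` has boost order at most `b` with respect to the null
direction `ℓ`: in any null frame containing `ℓ`, all frame components of boost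
weight `> b` vanish.  `b = 0` is the aligned type II condition, `b = -1` type III. -/
def BoostOrderLE {n k : ℕ} [NeZero n] (g : MetricField n) (ℓ : VecField n)
    (T : TensorField n k) (b : ℤ) : Prop :=
  ∀ (x : Pt n) (fr : NullFrameAt g x), fr.e 0 = ℓ x →
    ∀ a : Fin k → Fin n, b < bw a → frameComp T fr.e x a = 0

/-- `g` is a degenerate Kundt metric with Kundt null direction `ℓ`: `ℓ` is Kundt and
the Riemann tensor together with its covariant derivatives of all orders is of aligned
type II with respect to `ℓ`. -/
def IsDegenerateKundt {n : ℕ} [NeZero n] (g : MetricField n) (ℓ : VecField n) : Prop :=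
  IsKundt g ℓ ∧ ∀ I : ℕ, BoostOrderLE g ℓ (covDIter g (riemann g) I) 0

/-! ### Exterior derivative, Hodge dual, Maxwell equations -/

/-- Exterior derivative (components, no normalization factor). -/
def extD {n k : ℕ} (F : TensorField n k) : TensorField n (k+1) := fun x idx =>
  ∑ m : Fin (k+1), (-1 : ℝ) ^ (m : ℕ) *
    pd (fun y => F y fun i => idx (m.succAbove i)) (idx m) x

/-- Sign of a self-map of `Fin k` (0 if not bijective). -/
def permSign {k : ℕ} (f : Fin k → Fin k) : ℤ :=
  if h : Function.Bijective f then Equiv.Perm.sign (Equiv.ofBijective f h) else 0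

/-- Raise all indices of a covariant tensor with the inverse metric. -/
def raiseAll {n k : ℕ} (g : MetricField n) (T : TensorField n k) : TensorField n k :=
  fun x idx => ∑ jdx : Fin k → Fin n, (∏ m, (g x)⁻¹ (idx m) (jdx m)) * T x jdx

/-- Hodge dual of a `p`-form (`p + q = n`), via the metric volume element
`√|det g| ε_{a₁…aₙ}`. -/
def hodge {n p q : ℕ} (h : p + q = n) (g : MetricField n) (F : TensorField n p) :
    TensorField n q := fun x idx =>
  (1 / (Nat.factorial p : ℝ)) *
    ∑ a : Fin p → Fin n, raiseAll g F x a *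
      (Real.sqrt |(g x).det| *
        ((permSign fun i => Fin.append a idx (Fin.cast h.symm i) : ℤ) : ℝ))

/-- Source-free Maxwell equations `dF = 0 = d*F` for a `p`-form (`p + q = n`). -/
def MaxwellEqs {n p q : ℕ} (h : p + q = n) (g : MetricField n) (F : TensorField n p) : Prop :=
  (∀ x idx, extD F x idx = 0) ∧ (∀ x idx, extD (hodge h g F) x idx = 0)

/-! ### Wedge products -/

def wedgeP {n a b : ℕ} (F : TensorField n a) (G : TensorField n b) : TensorField n (a+b) :=
  fun x idx => ∑ σ : Equiv.Perm (Fin (a+b)), ((Equiv.Perm.sign σ : ℤ) : ℝ) *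
    (F x fun i => idx (σ (Fin.castAdd b i))) * (G x fun j => idx (σ (Fin.natAdd a j)))

def wedgePow {n p : ℕ} (F : TensorField n p) : (k : ℕ) → TensorField n (p * k)
  | 0 => fun _ _ => 1
  | k + 1 => wedgeP (wedgePow F k) F

def castT {n a b : ℕ} (h : a = b) (T : TensorField n a) : TensorField n b :=
  fun x idx => T x fun i => idx (Fin.cast h i)

/-! ### Degenerate Kundt metrics in adapted coordinates -/

/-- The Kundt metric `ds² = 2 du (dr + H du + W_α dx^α) + g_{αβ} dx^α dx^β` in
coordinates `(u, r, x^α) = (x⁰, x¹, x^{α≥2})`. -/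
def kundtMetric {n : ℕ} (H : Pt n → ℝ) (W : Pt n → Fin n → ℝ) (hT : MetricField n) :
    MetricField n := fun x => Matrix.of fun a b =>
  if (a : ℕ) = 0 ∧ (b : ℕ) = 0 then 2 * H x
  else if ((a : ℕ) = 0 ∧ (b : ℕ) = 1) ∨ ((a : ℕ) = 1 ∧ (b : ℕ) = 0) then 1
  else if (a : ℕ) = 0 then W x b
  else if (b : ℕ) = 0 then W x a
  else if (a : ℕ) = 1 ∨ (b : ℕ) = 1 then 0
  else hT x a b

/-- A transverse (Riemannian) metric `g_{αβ}(u,x)`, stored as an `n×n` matrix padded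
by the identity on the coordinates `u, r`. -/
def IsTransverseMetric {n : ℕ} (hT : MetricField n) : Prop :=
  (∀ (x : Pt n) (a b : Fin n), ((a : ℕ) < 2 ∨ (b : ℕ) < 2) → hT x a b = (if a = b then 1 else 0)) ∧
  (∀ x, (hT x).IsSymm) ∧ (∀ a b, ContDiff ℝ (⊤ : ℕ∞) fun x => hT x a b) ∧
  IndepOfR hT ∧ (∀ x, (hT x).PosDef)

/-- Data of a degenerate Kundt metric: `W_α = r W¹_α + W⁰_α`,
`H = r² H² + r H¹ + H⁰`, transverse metric `hT`. -/
structure DegKundtData (n : ℕ) where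
  H2 : Pt n → ℝ
  H1 : Pt n → ℝ
  H0 : Pt n → ℝ
  W1 : Pt n → Fin n → ℝ
  W0 : Pt n → Fin n → ℝ
  hT : MetricField n

def DegKundtData.Hfun {n : ℕ} [NeZero n] (D : DegKundtData n) : Pt n → ℝ :=
  fun z => (z 1)^2 * D.H2 z + z 1 * D.H1 z + D.H0 z

def DegKundtData.Wfun {n : ℕ} [NeZero n] (D : DegKundtData n) : Pt n → Fin n → ℝ :=
  fun z b => z 1 * D.W1 z b + D.W0 z b

/-- The degenerate Kundt metric built from the data. -/
def DegKundtData.metric {n : ℕ} [NeZero n] (D : DegKundtData n) : MetricField n :=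
  kundtMetric D.Hfun D.Wfun D.hT

/-- Regularity and shape conditions on the degenerate Kundt data: the metric functions
depend only on `(u, x^α)` and are smooth, `W`'s are transverse. -/
def DegKundtData.Regular {n : ℕ} (D : DegKundtData n) : Prop :=
  IsTransverseMetric D.hT ∧
  IndepOfR D.H2 ∧ IndepOfR D.H1 ∧ IndepOfR D.H0 ∧ IndepOfR D.W1 ∧ IndepOfR D.W0 ∧
  ContDiff ℝ (⊤ : ℕ∞) D.H2 ∧ ContDiff ℝ (⊤ : ℕ∞) D.H1 ∧ ContDiff ℝ (⊤ : ℕ∞) D.H0 ∧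
  (∀ a, ContDiff ℝ (⊤ : ℕ∞) fun x => D.W1 x a) ∧ (∀ a, ContDiff ℝ (⊤ : ℕ∞) fun x => D.W0 x a) ∧
  (∀ (x : Pt n) (a : Fin n), (a : ℕ) < 2 → D.W1 x a = 0) ∧ (∀ (x : Pt n) (a : Fin n), (a : ℕ) < 2 → D.W0 x a = 0)

/-- The `(q+1)`-form `du ∧ f` built from a transverse `q`-form `f`. -/
def duWedge {n q : ℕ} (f : TensorField n q) : TensorField n (q+1) := fun x idx =>
  ∑ m : Fin (q+1), (-1 : ℝ) ^ (m : ℕ) * (if (idx m : ℕ) = 0 then 1 else 0) *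
    f x (fun i => idx (m.succAbove i))

/-- `f_{[α₂…α_p , α₁]} = 0`: `f` is closed in the transverse geometry. -/
def TransClosed {n q : ℕ} (f : TensorField n q) : Prop :=
  ∀ (x : Pt n) (v : Fin (q+1) → Fin n), (∀ i, 2 ≤ (v i : ℕ)) →
    (∑ m : Fin (q+1), (-1 : ℝ) ^ (m : ℕ) *
      pd (fun y => f y fun i => v (m.succAbove i)) (v m) x) = 0

/-- `(√g̃ f^{β α₁…α_{p-2}})_{,β} = 0`: `f` is co-closed in the transverse geometry. -/
def TransCoclosed {n q : ℕ} [NeZero q] (hT : MetricField n) (f : TensorField n q) : Prop :=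
  ∀ (x : Pt n) (v : Fin q → Fin n),
    (∑ b : Fin n, pd (fun y =>
      Real.sqrt (hT y).det * raiseAll hT f y (Function.update v 0 b)) b x) = 0

/-! ### Transverse curvature -/

def christoffelT {n : ℕ} (h : MetricField n) (x : Pt n) (a b c : Fin n) : ℝ :=
  (1/2) * ∑ d, (h x)⁻¹ a d *
    (pdT (fun y => h y d c) b x + pdT (fun y => h y b d) c x - pdT (fun y => h y b c) d x)

def covDT {n k : ℕ} (h : MetricField n) (T : TensorField n k) : TensorField n (k+1) :=
  fun x idx =>
    pdT (fun y => T y fun m => idx m.succ) (idx 0) x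
    - ∑ m : Fin k, ∑ e : Fin n,
        christoffelT h x e (idx 0) (idx m.succ) * T x (Function.update (fun m' => idx m'.succ) m e)

def riemannT {n : ℕ} (h : MetricField n) : TensorField n 4 := fun x idx =>
  ∑ e, h x (idx 0) e *
    (pdT (fun y => christoffelT h y e (idx 3) (idx 1)) (idx 2) x
     - pdT (fun y => christoffelT h y e (idx 2) (idx 1)) (idx 3) x
     + ∑ f', (christoffelT h x e (idx 2) f' * christoffelT h x f' (idx 3) (idx 1)
            - christoffelT h x e (idx 3) f' * christoffelT h x f' (idx 2) (idx 1)))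

def ricciT {n : ℕ} (h : MetricField n) (x : Pt n) (b d : Fin n) : ℝ :=
  ∑ a, ∑ c, (h x)⁻¹ a c * riemannT h x ![a, b, c, d]

def ricciScalarT {n : ℕ} (h : MetricField n) (x : Pt n) : ℝ :=
  ∑ b, ∑ d, (h x)⁻¹ b d * ricciT h x b d

/-- A covector field as a rank-1 tensor field. -/
def oneForm {n : ℕ} (W : Pt n → Fin n → ℝ) : TensorField n 1 := fun x idx => W x (idx 0)

/-- Transverse covariant derivative `∇̃_b V_a` (`= V_{a||b}`). -/
def nablaT {n : ℕ} (h : MetricField n) (V : TensorField n 1) (x : Pt n) (b a : Fin n) : ℝ :=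
  covDT h V x ![b, a]

/-- Second transverse covariant derivative `∇̃_c ∇̃_b V_a`. -/
def nablaT2 {n : ℕ} (h : MetricField n) (V : TensorField n 1) (x : Pt n) (c b a : Fin n) : ℝ :=
  covDT h (covDT h V) x ![c, b, a]

/-- Transverse divergence `V^{α}{}_{||α}`. -/
def divT {n : ℕ} (h : MetricField n) (V : TensorField n 1) (x : Pt n) : ℝ :=
  ∑ b, ∑ c, (h x)⁻¹ b c * nablaT h V x b c

def gradT {n : ℕ} (f : Pt n → ℝ) : TensorField n 1 := fun x idx => pdT f (idx 0) x

/-- Transverse Laplacian. -/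
def laplaceT {n : ℕ} (h : MetricField n) (f : Pt n → ℝ) (x : Pt n) : ℝ :=
  ∑ a, ∑ b, (h x)⁻¹ a b * covDT h (gradT f) x ![a, b]

def lnSqrtDet {n : ℕ} (h : MetricField n) (y : Pt n) : ℝ :=
  Real.log (Real.sqrt (h y).det)

/-! ### Electromagnetic energy-momentum tensor -/

/-- Standard energy-momentum tensor of a `(q+1)`-form Maxwell field:
`T_{ab} = (1/q!) (F_{a c⃗} F_b{}^{c⃗} - (1/(2(q+1))) g_{ab} F_{c⃗}F^{c⃗})`. -/
def emTensor {n q : ℕ} (g : MetricField n) (F : TensorField n (q+1)) (x : Pt n)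
    (a b : Fin n) : ℝ :=
  (1 / (Nat.factorial q : ℝ)) *
    ((∑ v : Fin q → Fin n, F x (Fin.cons a v) *
        ∑ w : Fin q → Fin n, (∏ i, (g x)⁻¹ (v i) (w i)) * F x (Fin.cons b w))
     - (1 / (2 * ((q : ℝ) + 1))) * g x a b *
        ∑ v : Fin (q+1) → Fin n, F x v * raiseAll g F x v)

/-! ### Coordinate transformations (for adapted coordinates) -/

/-- Jacobian `∂ψ^a/∂y^b` of a coordinate change. -/
def jac {n : ℕ} (ψ : Pt n → Pt n) (y : Pt n) (a b : Fin n) : ℝ :=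
  pd (fun z => ψ z a) b y

/-- Pullback of the metric along the coordinate change `ψ` (from new to old coords). -/
def pullMetric {n : ℕ} (g : MetricField n) (ψ : Pt n → Pt n) : MetricField n :=
  fun y => Matrix.of fun μ ν => ∑ a, ∑ b, jac ψ y a μ * jac ψ y b ν * g (ψ y) a b

/-- Pullback of a covariant tensor field along `ψ`. -/
def pullForm {n p : ℕ} (F : TensorField n p) (ψ : Pt n → Pt n) : TensorField n p :=
  fun y idx => ∑ jdx : Fin p → Fin n, (∏ m, jac ψ y (jdx m) (idx m)) * F (ψ y) jdx

/-! ### Parallelly transported adapted frames -/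

/-- A null frame field containing `ℓ`, parallelly transported along `ℓ` and adapted
(`M^i_{jk} = 0`). -/
structure AdaptedPTFrame {n : ℕ} [NeZero n] (g : MetricField n) (ℓ : VecField n) where
  fr : ∀ x : Pt n, NullFrameAt g x
  aligned : ∀ x, (fr x).e 0 = ℓ x
  parallel : ∀ (x : Pt n) (a c : Fin n),
    (∑ b, ℓ x b * (pd (fun y => (fr y).e a c) b x
      + ∑ d, christoffel g x c b d * (fr x).e a d)) = 0
  adapted : ∀ (x : Pt n) (i j k : Fin n), 2 ≤ (i : ℕ) → 2 ≤ (j : ℕ) → 2 ≤ (k : ℕ) →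
    (∑ a, ∑ b, covD g (lowerField g fun z => (fr z).e j) x ![b, a]
      * (fr x).e i a * (fr x).e k b) = 0

/-! ### Explicit Petrov type III solutions -/

/-- The type III vacuum metric of Petrov,
`ds² = 2 du (dr + ½(xr − x eˣ) du) + eˣ(dx² + e^{2u} dy²)`, in coordinates
`(u,r,x,y)`. -/
def petrovG : MetricField 4 := fun z => Matrix.of fun a b =>
  if a = 0 ∧ b = 0 then z 2 * z 1 - z 2 * Real.exp (z 2)
  else if (a = 0 ∧ b = 1) ∨ (a = 1 ∧ b = 0) then 1
  else if a = 2 ∧ b = 2 then Real.exp (z 2)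
  else if a = 3 ∧ b = 3 then Real.exp (z 2 + 2 * z 0)
  else 0

/-- The same metric with the electromagnetic backreaction term
`−2κ₀ eˣ c(u)²` included in `2H`. -/
def petrovEM (κ₀ : ℝ) (c : ℝ → ℝ) : MetricField 4 := fun z => Matrix.of fun a b =>
  if a = 0 ∧ b = 0 then z 2 * z 1 - z 2 * Real.exp (z 2) - 2 * κ₀ * Real.exp (z 2) * (c (z 0))^2
  else if (a = 0 ∧ b = 1) ∨ (a = 1 ∧ b = 0) then 1
  else if a = 2 ∧ b = 2 then Real.exp (z 2)
  else if a = 3 ∧ b = 3 then Real.exp (z 2 + 2 * z 0)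
  else 0

/-- The null direction `ℓ = ∂_r`. -/
def ellR : VecField 4 := fun _ a => if a = 1 then 1 else 0

/-- The transverse covector of the VSI Maxwell field (4). -/
def petrovA (c : ℝ → ℝ) (z : Pt 4) : Fin 4 → ℝ := fun a =>
  if a = 2 then -(Real.exp (z 2 / 2) * c (z 0) * Real.cos (z 3 * Real.exp (z 0) / 2))
  else if a = 3 then Real.exp (z 2 / 2) * c (z 0) * Real.exp (z 0) * Real.sin (z 3 * Real.exp (z 0) / 2)
  else 0

/-- The Maxwell 2-form
`F = e^{x/2} c(u) du ∧ (−cos(y eᵘ/2) dx + eᵘ sin(y eᵘ/2) dy)`. -/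
def petrovF (c : ℝ → ℝ) : TensorField 4 2 := fun z idx =>
  (if idx 0 = 0 then petrovA c z (idx 1) else 0)
  - (if idx 1 = 0 then petrovA c z (idx 0) else 0)

/-!
Grade coordinate components by boost weight: each index `u` counts `-1`, each index `r` counts `+1`.
In the coordinates `(u, r, x, y)` every Christoffel symbol of weight `-w` vanishes if `w < 0` and is
a polynomial in `r` of degree less than `w` if `w ≥ 1`. Covariant differentiation therefore does not
raise the boost order of tensors whose components obey the same rule. The Riemann tensor has
boost order `-1`, and so has the Weyl tensor, which is Weyl type III. The only component of the
Ricci tensor is `R_{uu}`, where the `c(u)²` term of the metric reproduces the energy density of the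
null field.

The field is the real part of the self-dual null 2-form
`-c(u) e^{(x + i y eᵘ)/2} du ∧ (dx + i eᵘ dy)`, whose covariant derivative has boost order `-2`
rather than just `-1`. A concomitant of `F` of rank 2 has boost weight at least `-2`, so it vanishes
if it has three factors, or two of which one is differentiated. What remains besides `F ⊗ F` is a
single factor `∇ⁱF`. If `i ≥ 1`, some pair of its indices is contracted. In the leading components
of a self-dual tensor each `y` equals `i eᵘ` times an `x`, hence the `xx` and `yy` terms of that
contraction cancel. So there are no corrections to the energy-momentum tensor, and since `F ⊗ F`
contributes only the symmetric tensor `du ⊗ du`, the 2-forms built from `F` are its constant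
multiples.
-/

section PartialDerivative

variable {n : ℕ} {E : Type*} [NormedAddCommGroup E] [NormedSpace ℝ E]

/-- Partial derivative along the `a`-th coordinate of a function with values in a normed space;
`pd` is the real-valued case. The values `ℂ` occur for the self-dual part of the field. -/
def partialDeriv (a : Fin n) (f : Pt n → E) (x : Pt n) : E :=
  fderiv ℝ f x (Pi.single a 1)

theorem pd_eq_partialDeriv (f : Pt n → ℝ) (a : Fin n) (x : Pt n) :
    pd f a x = partialDeriv a f x :=
  rfl

@[simp]
theorem partialDeriv_const (a : Fin n) (v : E) (x : Pt n) :
    partialDeriv a (fun _ => v) x = 0 := by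
  simp [partialDeriv]

theorem partialDeriv_add {f g : Pt n → E} {x : Pt n} (a : Fin n) (hf : DifferentiableAt ℝ f x)
    (hg : DifferentiableAt ℝ g x) :
    partialDeriv a (fun y => f y + g y) x = partialDeriv a f x + partialDeriv a g x := by
  simp [partialDeriv, fderiv_fun_add hf hg]

theorem partialDeriv_sub {f g : Pt n → E} {x : Pt n} (a : Fin n) (hf : DifferentiableAt ℝ f x)
    (hg : DifferentiableAt ℝ g x) :
    partialDeriv a (fun y => f y - g y) x = partialDeriv a f x - partialDeriv a g x := by
  simp [partialDeriv, fderiv_fun_sub hf hg]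

theorem partialDeriv_neg (f : Pt n → E) (x : Pt n) (a : Fin n) :
    partialDeriv a (fun y => -f y) x = -partialDeriv a f x := by
  simp [partialDeriv, fderiv_fun_neg]

theorem partialDeriv_smul {f : Pt n → ℝ} {g : Pt n → E} {x : Pt n} (a : Fin n)
    (hf : DifferentiableAt ℝ f x) (hg : DifferentiableAt ℝ g x) :
    partialDeriv a (fun y => f y • g y) x =
      partialDeriv a f x • g x + f x • partialDeriv a g x := by
  simp [partialDeriv, fderiv_fun_smul hf hg, add_comm]

theorem partialDeriv_mul {A : Type*} [NormedCommRing A] [NormedAlgebra ℝ A] {f g : Pt n → A}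
    {x : Pt n} (a : Fin n) (hf : DifferentiableAt ℝ f x) (hg : DifferentiableAt ℝ g x) :
    partialDeriv a (fun y => f y * g y) x =
      partialDeriv a f x * g x + f x * partialDeriv a g x := by
  simp [partialDeriv, fderiv_fun_mul hf hg, mul_comm, add_comm]

theorem partialDeriv_clm_comp {F : Type*} [NormedAddCommGroup F] [NormedSpace ℝ F] (L : E →L[ℝ] F)
    {f : Pt n → E} {x : Pt n} (a : Fin n) (hf : DifferentiableAt ℝ f x) :
    partialDeriv a (fun y => L (f y)) x = L (partialDeriv a f x) := by
  have h : HasFDerivAt (fun y => L (f y)) (L.comp (fderiv ℝ f x)) x :=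
    L.hasFDerivAt.comp x hf.hasFDerivAt
  simp [partialDeriv, h.fderiv]

theorem partialDeriv_scomp {φ : ℝ → E} {f : Pt n → ℝ} {x : Pt n} (a : Fin n)
    (hφ : DifferentiableAt ℝ φ (f x)) (hf : DifferentiableAt ℝ f x) :
    partialDeriv a (fun y => φ (f y)) x = partialDeriv a f x • deriv φ (f x) := by
  have h : HasFDerivAt (fun y => φ (f y)) ((fderiv ℝ φ (f x)).comp (fderiv ℝ f x)) x :=
    hφ.hasFDerivAt.comp x hf.hasFDerivAt
  simp [partialDeriv, h.fderiv]

@[simp]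
theorem partialDeriv_coord (i a : Fin n) (x : Pt n) :
    partialDeriv a (fun y => y i) x = if i = a then 1 else 0 := by
  simp [partialDeriv, (hasFDerivAt_apply (𝕜 := ℝ) i x).fderiv, Pi.single_apply]

theorem partialDeriv_comp_coord {φ : ℝ → E} (hφ : Differentiable ℝ φ) (i a : Fin n) (x : Pt n) :
    partialDeriv a (fun y => φ (y i)) x = if i = a then deriv φ (x i) else 0 := by
  rw [partialDeriv_scomp a (hφ _) (by fun_prop)]
  simp

theorem partialDeriv_exp {f : Pt n → ℝ} {x : Pt n} (a : Fin n) (hf : DifferentiableAt ℝ f x) :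
    partialDeriv a (fun y => Real.exp (f y)) x = partialDeriv a f x * Real.exp (f x) := by
  rw [partialDeriv_scomp a (by fun_prop) hf]
  simp

theorem partialDeriv_cexp {f : Pt n → ℂ} {x : Pt n} (a : Fin n) (hf : DifferentiableAt ℝ f x) :
    partialDeriv a (fun y => Complex.exp (f y)) x = partialDeriv a f x * Complex.exp (f x) := by
  simp [partialDeriv, hf.hasFDerivAt.cexp.fderiv, mul_comm]

theorem partialDeriv_ofReal {f : Pt n → ℝ} {x : Pt n} (a : Fin n) (hf : DifferentiableAt ℝ f x) :
    partialDeriv a (fun y => (f y : ℂ)) x = partialDeriv a f x :=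
  partialDeriv_clm_comp Complex.ofRealCLM a hf

theorem partialDeriv_comm {f : Pt n → E} (hf : ContDiff ℝ (⊤ : ℕ∞) f) (a b : Fin n) (x : Pt n) :
    partialDeriv a (partialDeriv b f) x = partialDeriv b (partialDeriv a f) x := by
  have hdiff : DifferentiableAt ℝ (fderiv ℝ f) x :=
    (hf.fderiv_right (m := (⊤ : ℕ∞)) (by simp)).differentiable (by simp) x
  have hsecond : ∀ a b : Fin n, partialDeriv a (partialDeriv b f) x =
      fderiv ℝ (fderiv ℝ f) x (Pi.single a 1) (Pi.single b 1) := fun a b => by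
    unfold partialDeriv
    rw [fderiv_clm_apply hdiff (differentiableAt_const _)]
    simp
  rw [hsecond, hsecond]
  refine (hf.contDiffAt.isSymmSndFDerivAt ?_).eq _ _
  simpa using WithTop.coe_le_coe.2 (le_top (a := (2 : ℕ∞)))

theorem contDiff_partialDeriv {f : Pt n → E} (hf : ContDiff ℝ (⊤ : ℕ∞) f) (a : Fin n) :
    ContDiff ℝ (⊤ : ℕ∞) (partialDeriv a f) :=
  (hf.fderiv_right (by simp)).clm_apply contDiff_const

end PartialDerivative

/-- Boost weight of a coordinate index: `-1` for `u`, `+1` for `r` (the direction of `ℓ`), `0` for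
the transverse coordinates. -/
def coordWeight {n : ℕ} (a : Fin n) : ℤ :=
  if (a : ℕ) = 0 then -1 else if (a : ℕ) = 1 then 1 else 0

section BalancedScalar

variable {n : ℕ} [NeZero n] {E : Type*} [NormedAddCommGroup E] [NormedSpace ℝ E]

/-- `f` is smooth and polynomial in the coordinate `r` of degree `< k`, encoded as
`∂ᵣᵏ f = 0`. -/
structure RDegreeLT (k : ℕ) (f : Pt n → E) : Prop where
  contDiff : ContDiff ℝ (⊤ : ℕ∞) f
  iterate_eq_zero : (partialDeriv 1)^[k] f = 0

namespace RDegreeLT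

variable {k l : ℕ} {f g : Pt n → E}

theorem differentiable (hf : RDegreeLT k f) : Differentiable ℝ f :=
  hf.contDiff.differentiable (by simp)

theorem zero_iff : RDegreeLT 0 f ↔ f = 0 :=
  ⟨fun hf => hf.iterate_eq_zero, fun hf => ⟨hf ▸ contDiff_const, hf⟩⟩

theorem succ_iff : RDegreeLT (k + 1) f ↔
    ContDiff ℝ (⊤ : ℕ∞) f ∧ RDegreeLT k (partialDeriv 1 f) :=
  ⟨fun hf => ⟨hf.contDiff, contDiff_partialDeriv hf.contDiff 1, hf.iterate_eq_zero⟩,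
    fun hf => ⟨hf.1, hf.2.iterate_eq_zero⟩⟩

theorem zero (k : ℕ) : RDegreeLT k (0 : Pt n → E) := by
  induction k with
  | zero => exact zero_iff.2 rfl
  | succ k ih =>
    refine succ_iff.2 ⟨contDiff_const, ?_⟩
    rwa [show partialDeriv 1 (0 : Pt n → E) = 0 from funext fun x => partialDeriv_const 1 0 x]

theorem mono (hkl : k ≤ l) (hf : RDegreeLT k f) : RDegreeLT l f := by
  obtain ⟨m, rfl⟩ := Nat.exists_eq_add_of_le' hkl
  refine ⟨hf.contDiff, ?_⟩
  rw [Function.iterate_add_apply, hf.iterate_eq_zero]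
  exact (zero m).iterate_eq_zero

theorem add (hf : RDegreeLT k f) (hg : RDegreeLT k g) : RDegreeLT k fun x => f x + g x := by
  induction k generalizing f g with
  | zero =>
    rw [zero_iff] at *
    simp [hf, hg, Pi.zero_def]
  | succ k ih =>
    refine succ_iff.2 ⟨hf.contDiff.add hg.contDiff, ?_⟩
    rw [show partialDeriv 1 (fun x => f x + g x) = _ from
      funext fun x => partialDeriv_add 1 (hf.differentiable x) (hg.differentiable x)]
    exact ih (succ_iff.1 hf).2 (succ_iff.1 hg).2

theorem partialDeriv (hf : RDegreeLT k f) (a : Fin n) : RDegreeLT k (partialDeriv a f) := by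
  induction k generalizing f with
  | zero =>
    rw [zero_iff] at *
    subst hf
    exact funext fun x => partialDeriv_const a 0 x
  | succ k ih =>
    refine succ_iff.2 ⟨contDiff_partialDeriv hf.contDiff a, ?_⟩
    rw [funext fun x => partialDeriv_comm hf.contDiff 1 a x]
    exact ih (succ_iff.1 hf).2

theorem smul {f : Pt n → ℝ} (hf : RDegreeLT k f) (hg : RDegreeLT l g) :
    RDegreeLT (k + l - 1) fun x => f x • g x := by
  induction hN : k + l using Nat.strong_induction_on generalizing k l f g with
  | _ N ih =>
  match k, l with
  | 0, _ =>
    rw [zero_iff.1 hf]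
    simpa [← Pi.zero_def] using zero _
  | _, 0 =>
    rw [zero_iff.1 hg]
    simpa [← Pi.zero_def] using zero _
  | k + 1, l + 1 =>
    obtain rfl : N = k + l + 1 + 1 := by omega
    refine succ_iff.2 ⟨hf.contDiff.smul hg.contDiff, ?_⟩
    rw [show VSI.partialDeriv 1 (fun x => f x • g x) = _ from
      funext fun x => partialDeriv_smul 1 (hf.differentiable x) (hg.differentiable x)]
    exact (ih _ (by omega) (succ_iff.1 hf).2 hg rfl |>.mono (by omega)).add
      (ih _ (by omega) hf (succ_iff.1 hg).2 rfl |>.mono (by omega))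

theorem sub (hf : RDegreeLT k f) (hg : RDegreeLT k g) : RDegreeLT k fun x => f x - g x := by
  have hone : RDegreeLT 1 fun _ : Pt n => (-1 : ℝ) :=
    ⟨contDiff_const, funext fun x => partialDeriv_const 1 _ x⟩
  simpa [sub_eq_add_neg] using hf.add (hone.smul hg |>.mono (by omega))

end RDegreeLT

/-- Balanced scalars of boost weight `-w`: `f = 0` if `w < 0`, and `∂ᵣ^w f = 0` if `w ≥ 1`. At
`w = 0` we allow any smooth function independent of `r`, so that e.g. the weight-zero Christoffel
symbols of a degenerate Kundt metric qualify. -/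
def IsBalancedScalar (w : ℤ) (f : Pt n → E) : Prop :=
  RDegreeLT (if w < 0 then 0 else max w.toNat 1) f

namespace IsBalancedScalar

variable {w w' : ℤ} {f g : Pt n → E}

theorem eq_zero (hw : w < 0) (hf : IsBalancedScalar w f) : f = 0 := by
  rw [IsBalancedScalar, if_pos hw] at hf
  exact RDegreeLT.zero_iff.1 hf

theorem zero (w : ℤ) : IsBalancedScalar w (0 : Pt n → E) :=
  RDegreeLT.zero _

theorem mono (hw : w ≤ w') (hf : IsBalancedScalar w f) : IsBalancedScalar w' f :=
  RDegreeLT.mono (by split_ifs <;> omega) hf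

theorem add (hf : IsBalancedScalar w f) (hg : IsBalancedScalar w g) :
    IsBalancedScalar w fun x => f x + g x :=
  RDegreeLT.add hf hg

theorem sub (hf : IsBalancedScalar w f) (hg : IsBalancedScalar w g) :
    IsBalancedScalar w fun x => f x - g x :=
  RDegreeLT.sub hf hg

theorem sum {ι : Type*} {s : Finset ι} {f : ι → Pt n → E}
    (hf : ∀ i ∈ s, IsBalancedScalar w (f i)) : IsBalancedScalar w fun x => ∑ i ∈ s, f i x := by
  classical
  induction s using Finset.induction_on with
  | empty => simpa [← Pi.zero_def] using zero w
  | insert i s hi ih =>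
    simp only [Finset.sum_insert hi]
    exact (hf i (by simp)).add (ih fun j hj => hf j (by simp [hj]))

theorem smul {f : Pt n → ℝ} (hf : IsBalancedScalar w f) (hg : IsBalancedScalar w' g) :
    IsBalancedScalar (w + w') fun x => f x • g x := by
  by_cases hneg : w < 0 ∨ w' < 0
  · have hzero : (fun x => f x • g x) = 0 := by
      rcases hneg with h | h
      · simp [hf.eq_zero h, Pi.zero_def]
      · simp [hg.eq_zero h, Pi.zero_def]
    exact hzero ▸ zero _
  · exact (RDegreeLT.smul hf hg).mono (by split_ifs <;> omega)

theorem of_partialDeriv_eq_zero (hw : 0 ≤ w) (hf : ContDiff ℝ (⊤ : ℕ∞) f)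
    (h : ∀ x, partialDeriv 1 f x = 0) : IsBalancedScalar w f :=
  RDegreeLT.mono (k := 1) (by split_ifs <;> omega) ⟨hf, funext h⟩

theorem of_partialDeriv (hw : 2 ≤ w) (hf : ContDiff ℝ (⊤ : ℕ∞) f)
    (h : IsBalancedScalar (w - 1) (partialDeriv 1 f)) : IsBalancedScalar w f :=
  (RDegreeLT.succ_iff.2 ⟨hf, h⟩).mono (by split_ifs <;> omega)

theorem partialDeriv_eq_zero (hw : w ≤ 1) (hf : IsBalancedScalar w f) : partialDeriv 1 f = 0 :=
  (hf.mono hw).iterate_eq_zero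

theorem partialDeriv (hf : IsBalancedScalar w f) (a : Fin n) :
    IsBalancedScalar (w - coordWeight a) (partialDeriv a f) := by
  by_cases ha : (a : ℕ) = 1
  · obtain rfl : a = 1 := Fin.ext (by simp [ha, Nat.mod_eq_of_lt (ha ▸ a.isLt)])
    rcases le_or_gt w 1 with hw | hw
    · exact hf.partialDeriv_eq_zero hw ▸ zero _
    · have hk : (if w < 0 then 0 else max w.toNat 1) = (w - 1).toNat + 1 := by split_ifs <;> omega
      rw [IsBalancedScalar, hk] at hf
      exact (RDegreeLT.succ_iff.1 hf).2.mono (by rw [coordWeight, ha]; split_ifs <;> omega)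
  · exact mono (by unfold coordWeight; split_ifs <;> omega) (RDegreeLT.partialDeriv hf a)

end IsBalancedScalar

end BalancedScalar

section BoostWeight

variable {n : ℕ}

/-- Boost weight of a coordinate component of a covariant tensor. -/
def boostWeight {ι : Type*} [Fintype ι] (idx : ι → Fin n) : ℤ :=
  ∑ m, coordWeight (idx m)

theorem neg_one_le_coordWeight (a : Fin n) : -1 ≤ coordWeight a := by
  unfold coordWeight
  split_ifs <;> decide

theorem neg_le_boostWeight {k : ℕ} (idx : Fin k → Fin n) : -(k : ℤ) ≤ boostWeight idx := by
  simpa [boostWeight] using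
    Finset.card_nsmul_le_sum Finset.univ _ _ fun m _ => neg_one_le_coordWeight (idx m)

theorem boostWeight_eq_neg_iff {k : ℕ} {idx : Fin k → Fin n} :
    boostWeight idx = -k ↔ ∀ m, (idx m : ℕ) = 0 := by
  have hweight : ∀ a : Fin n, -1 = coordWeight a ↔ (a : ℕ) = 0 := fun a => by
    unfold coordWeight
    split_ifs <;> simp [*]
  have h := Finset.sum_eq_sum_iff_of_le fun m (_ : m ∈ Finset.univ) =>
    neg_one_le_coordWeight (idx m)
  simpa [boostWeight, hweight, eq_comm] using h

theorem boostWeight_eq_add_tail {k : ℕ} (idx : Fin (k + 1) → Fin n) :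
    boostWeight idx = coordWeight (idx 0) + boostWeight (Fin.tail idx) :=
  Fin.sum_univ_succ _

theorem boostWeight_update {ι : Type*} [Fintype ι] [DecidableEq ι] (idx : ι → Fin n) (m : ι)
    (a : Fin n) :
    boostWeight (Function.update idx m a) =
      boostWeight idx - coordWeight (idx m) + coordWeight a := by
  simp only [boostWeight, ← Finset.add_sum_erase Finset.univ _ (Finset.mem_univ m),
    Function.update_self]
  rw [Finset.sum_congr rfl fun i hi => by rw [Function.update_of_ne (Finset.ne_of_mem_erase hi)]]
  ring

theorem boostWeight_sumElim {ι κ : Type*} [Fintype ι] [Fintype κ] (v : ι → Fin n)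
    (w : κ → Fin n) : boostWeight (Sum.elim v w) = boostWeight v + boostWeight w := by
  simp [boostWeight]

theorem boostWeight_comp_equiv {ι κ : Type*} [Fintype ι] [Fintype κ] (e : ι ≃ κ)
    (idx : κ → Fin n) : boostWeight (idx ∘ e) = boostWeight idx :=
  e.sum_comp fun m => coordWeight (idx m)

-- In `bw` the indices `0` and `1` number the frame vectors `ℓ` and `n`, not the coordinates.
theorem bw_eq_neg_boostWeight {k : ℕ} (a : Fin k → Fin n) : bw a = -boostWeight a := by
  rw [bw, boostWeight, Finset.card_filter, Finset.card_filter]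
  push_cast
  rw [← Finset.sum_sub_distrib, ← Finset.sum_neg_distrib]
  refine Finset.sum_congr rfl fun m _ => ?_
  unfold coordWeight
  split_ifs <;> omega

end BoostWeight

section CovariantDerivative

variable {n k : ℕ} {E F : Type*} [NormedAddCommGroup E] [NormedSpace ℝ E]
  [NormedAddCommGroup F] [NormedSpace ℝ F]

/-- Covariant derivative of a covariant tensor field with values in a normed space; `covD` is the
real-valued case. -/
def covDeriv (g : MetricField n) (T : Pt n → (Fin k → Fin n) → E) (x : Pt n)
    (idx : Fin (k + 1) → Fin n) : E :=
  partialDeriv (idx 0) (fun y => T y (Fin.tail idx)) x -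
    ∑ m, ∑ e, christoffel g x e (idx 0) (Fin.tail idx m) •
      T x (Function.update (Fin.tail idx) m e)

theorem covD_eq_covDeriv (g : MetricField n) (T : TensorField n k) : covD g T = covDeriv g T :=
  rfl

theorem covDeriv_clm_comp (g : MetricField n) (L : E →L[ℝ] F) {T : Pt n → (Fin k → Fin n) → E}
    (hT : ∀ idx, Differentiable ℝ fun x => T x idx) :
    covDeriv g (fun x idx => L (T x idx)) = fun x idx => L (covDeriv g T x idx) := by
  funext x idx
  simp [covDeriv, partialDeriv_clm_comp L _ (hT _ x)]

end CovariantDerivative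

section Balanced

variable {n k : ℕ} {E : Type*} [NormedAddCommGroup E] [NormedSpace ℝ E]

/-- All coordinate components of boost weight `> b` vanish. -/
def CoordBoostOrderLE (T : Pt n → (Fin k → Fin n) → E) (b : ℤ) : Prop :=
  ∀ x idx, b < boostWeight idx → T x idx = 0

variable [NeZero n]

/-- Every coordinate component is a balanced scalar, with the boost weight counted from `b`. -/
def IsBalanced (T : Pt n → (Fin k → Fin n) → E) (b : ℤ) : Prop :=
  ∀ idx, IsBalancedScalar (b - boostWeight idx) fun x => T x idx

/-- The Christoffel symbols are balanced scalars. -/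
def HasBalancedConnection (g : MetricField n) : Prop :=
  ∀ a b c, IsBalancedScalar (coordWeight a - coordWeight b - coordWeight c)
    fun x => christoffel g x a b c

namespace IsBalanced

variable {g : MetricField n} {T : Pt n → (Fin k → Fin n) → E} {b : ℤ}

theorem contDiff (hT : IsBalanced T b) (idx : Fin k → Fin n) :
    ContDiff ℝ (⊤ : ℕ∞) fun x => T x idx :=
  RDegreeLT.contDiff (hT idx)

theorem coordBoostOrderLE (hT : IsBalanced T b) : CoordBoostOrderLE T b := fun x idx h =>
  congrFun ((hT idx).eq_zero (by omega)) x

theorem covDeriv (hT : IsBalanced T b) (hg : HasBalancedConnection g) :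
    IsBalanced (covDeriv g T) b := by
  intro idx
  rw [boostWeight_eq_add_tail]
  have hderiv := (hT (Fin.tail idx)).partialDeriv (idx 0)
  have hconn : ∀ m e, IsBalancedScalar (b - boostWeight (Fin.tail idx) - coordWeight (idx 0))
      fun x => christoffel g x e (idx 0) (Fin.tail idx m) •
        T x (Function.update (Fin.tail idx) m e) := fun m e =>
    ((hg e (idx 0) (Fin.tail idx m)).smul (hT (Function.update (Fin.tail idx) m e))).mono
      (by rw [boostWeight_update]; omega)
  refine (hderiv.sub (.sum fun m _ => .sum fun e _ => hconn m e)).mono (by omega)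

end IsBalanced

theorem CoordBoostOrderLE.boostOrderLE {g : MetricField n} {ℓ : VecField n} {T : TensorField n k}
    {b : ℤ} (hT : CoordBoostOrderLE T b) (hℓ : ∀ x, ℓ x = Pi.single 1 1)
    (hgℓ : ∀ x Y, gdot g x (ℓ x) Y = Y 0) : BoostOrderLE g ℓ T b := by
  intro x fr hfr a ha
  have hone : ((1 : Fin n) : ℕ) = 1 := by
    have hne : (1 : Fin n) ≠ 0 := fun h => by
      have h00 := fr.h00
      rw [hfr, hgℓ, hℓ, h] at h00
      simp at h00
    have hn : 1 < n := by
      by_contra hn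
      exact hne (Fin.ext (by omega))
    exact Nat.mod_eq_of_lt hn
  have hweight : ∀ i j, fr.e i j ≠ 0 → -coordWeight i ≤ coordWeight j := by
    intro i j hij
    rcases lt_trichotomy (i : ℕ) 1 with hi | hi | hi
    · obtain rfl : i = 0 := Fin.ext (by simpa using hi)
      rw [hfr, hℓ, Pi.single_apply, ite_ne_right_iff] at hij
      simp only [coordWeight, hij.1, hone, Fin.val_zero]
      norm_num
    · simpa [coordWeight, hi] using neg_one_le_coordWeight j
    · have hj : (j : ℕ) ≠ 0 := fun h => hij <| by
        obtain rfl : j = 0 := Fin.ext (by simpa using h)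
        rw [← hgℓ x (fr.e i), ← hfr, fr.h0i i hi]
      unfold coordWeight
      split_ifs <;> omega
  refine Finset.sum_eq_zero fun idx _ => ?_
  by_contra hne
  have hprod := Finset.prod_ne_zero_iff.1 (right_ne_zero_of_mul hne)
  have hsum : -boostWeight a ≤ boostWeight idx := by
    rw [boostWeight, ← Finset.sum_neg_distrib]
    exact Finset.sum_le_sum fun m hm => hweight _ _ (hprod m hm)
  rw [bw_eq_neg_boostWeight] at ha
  exact left_ne_zero_of_mul hne (hT x idx (by omega))

end Balanced

section Concomitants

variable {n k r : ℕ} {g : MetricField n} {T : TensorField n k}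

/-- The inverse metric has no components of negative boost weight, its indices being upper ones. -/
def HasBalancedInverse (g : MetricField n) : Prop :=
  ∀ x a b, coordWeight a + coordWeight b < 0 → (g x)⁻¹ a b = 0

/-- The multi-index of the `j`-th factor of a concomitant, for the values `φ` of the contracted and
`free` of the free indices. -/
def ConcomScheme.factorIdx (S : ConcomScheme k r) (φ : Fin S.m × Bool → Fin n)
    (free : Fin r → Fin n) (j : Fin S.N) : Fin (k + S.ord j) → Fin n :=
  fun s => Sum.elim φ free (S.slots.symm ⟨j, s⟩)

theorem ConcomScheme.sum_boostWeight_factorIdx (S : ConcomScheme k r)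
    (φ : Fin S.m × Bool → Fin n) (free : Fin r → Fin n) :
    ∑ j, boostWeight (S.factorIdx φ free j) =
      ∑ i, (coordWeight (φ (i, false)) + coordWeight (φ (i, true))) + boostWeight free := by
  calc ∑ j, boostWeight (S.factorIdx φ free j)
      = boostWeight (Sum.elim φ free ∘ S.slots.symm) := by
        rw [boostWeight, Fintype.sum_sigma]
        rfl
    _ = boostWeight φ + boostWeight free := by
        rw [boostWeight_comp_equiv, boostWeight_sumElim]
    _ = _ := by simp [boostWeight, Fintype.sum_prod_type, add_comm]

theorem ConcomScheme.prod_eq_zero_of_lt (S : ConcomScheme k r)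
    {b : Fin S.N → ℤ} (hT : ∀ j, CoordBoostOrderLE (covDIter g T (S.ord j)) (b j))
    (x : Pt n) (φ : Fin S.m × Bool → Fin n) (free : Fin r → Fin n)
    (h : ∑ j, b j < ∑ i, (coordWeight (φ (i, false)) + coordWeight (φ (i, true))) +
      boostWeight free) :
    ∏ j, covDIter g T (S.ord j) x (S.factorIdx φ free j) = 0 := by
  rw [← S.sum_boostWeight_factorIdx φ free] at h
  obtain ⟨j, -, hj⟩ := Finset.exists_lt_of_sum_lt h
  exact Finset.prod_eq_zero (Finset.mem_univ j) (hT j x _ hj)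

theorem ConcomScheme.value_eq_zero_of_lt (S : ConcomScheme k r) (hg : HasBalancedInverse g)
    {b : Fin S.N → ℤ} (hT : ∀ j, CoordBoostOrderLE (covDIter g T (S.ord j)) (b j))
    (x : Pt n) (free : Fin r → Fin n) (h : ∑ j, b j < boostWeight free) :
    S.value g T x free = 0 := by
  refine Finset.sum_eq_zero fun φ _ => ?_
  by_cases hφ : ∀ i, 0 ≤ coordWeight (φ (i, false)) + coordWeight (φ (i, true))
  · exact mul_eq_zero_of_right _ <| S.prod_eq_zero_of_lt hT x φ free <|
      h.trans_le (le_add_of_nonneg_left (Finset.sum_nonneg fun i _ => hφ i))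
  · obtain ⟨i, hi⟩ := not_forall.1 hφ
    exact mul_eq_zero_of_left (Finset.prod_eq_zero (Finset.mem_univ i) (hg x _ _ (not_le.1 hi))) _

end Concomitants

section PetrovConnection

/-- The metric `Q du² + 2 du dr + eˣ (dx² + e²ᵘ dy²)` in the coordinates `(u, r, x, y)`. -/
def petrovMetric (Q : Pt 4 → ℝ) : MetricField 4 := fun z =>
  !![Q z, 1, 0, 0;
     1, 0, 0, 0;
     0, 0, Real.exp (z 2), 0;
     0, 0, 0, Real.exp (z 2 + 2 * z 0)]

/-- The profiles `Q = x r + f(u, x, y)`, for which `petrovMetric Q` is of Petrov's form up to a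
plane-wave type deformation. -/
structure IsPetrovProfile (Q : Pt 4 → ℝ) : Prop where
  contDiff : ContDiff ℝ (⊤ : ℕ∞) Q
  partialDeriv_r : partialDeriv 1 Q = fun z => z 2

variable {Q : Pt 4 → ℝ}

theorem forall_fin_four {P : Fin 4 → Prop} : (∀ a, P a) ↔ P 0 ∧ P 1 ∧ P 2 ∧ P 3 := by
  simp [Fin.forall_fin_succ]

theorem petrovMetric_inv (Q : Pt 4 → ℝ) (z : Pt 4) :
    (petrovMetric Q z)⁻¹ =
      !![0, 1, 0, 0;
         1, -Q z, 0, 0;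
         0, 0, Real.exp (-z 2), 0;
         0, 0, 0, Real.exp (-(z 2 + 2 * z 0))] := by
  refine Matrix.inv_eq_right_inv ?_
  ext a b
  fin_cases a <;> fin_cases b <;>
    simp [petrovMetric, Matrix.mul_apply, Fin.sum_univ_four, ← Real.exp_add]

theorem det_petrovMetric (Q : Pt 4 → ℝ) (z : Pt 4) :
    (petrovMetric Q z).det = -Real.exp (z 2 + z 0) ^ 2 := by
  have hexp : Real.exp (z 2) * Real.exp (z 2 + 2 * z 0) = Real.exp (z 2 + z 0) ^ 2 := by
    rw [← Real.exp_add, ← Real.exp_nat_mul]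
    ring_nf
  rw [← hexp]
  simp [petrovMetric, Matrix.det_succ_row_zero, Fin.sum_univ_succ, Fin.succAbove]

theorem hasBalancedInverse_petrovMetric (Q : Pt 4 → ℝ) : HasBalancedInverse (petrovMetric Q) := by
  intro z
  simp [petrovMetric_inv, forall_fin_four, coordWeight]

theorem partialDeriv_petrovMetric (Q : Pt 4 → ℝ) (d a b : Fin 4) (z : Pt 4) :
    partialDeriv d (fun y => petrovMetric Q y a b) z =
      !![partialDeriv d Q z, 0, 0, 0;
         0, 0, 0, 0;
         0, 0, if 2 = d then Real.exp (z 2) else 0, 0;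
         0, 0, 0, ((if 2 = d then 1 else 0) + 2 * if 0 = d then 1 else 0) *
          Real.exp (z 2 + 2 * z 0)] a b := by
  fin_cases a <;> fin_cases b <;>
    simp (disch := fun_prop) [petrovMetric, partialDeriv_exp, partialDeriv_add, partialDeriv_mul]

/-- The Christoffel symbols `Γᵃ_{bc}` of `petrovMetric Q`, as a matrix in `b, c` for each `a`. -/
def petrovChristoffel (Q : Pt 4 → ℝ) (z : Pt 4) : Fin 4 → Matrix (Fin 4) (Fin 4) ℝ
  | 0 => !![-(z 2 / 2), 0, 0, 0;
            0, 0, 0, 0;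
            0, 0, 0, 0;
            0, 0, 0, 0]
  | 1 => !![1 / 2 * (partialDeriv 0 Q z + z 2 * Q z), z 2 / 2, 1 / 2 * partialDeriv 2 Q z,
              1 / 2 * partialDeriv 3 Q z;
            z 2 / 2, 0, 0, 0;
            1 / 2 * partialDeriv 2 Q z, 0, 0, 0;
            1 / 2 * partialDeriv 3 Q z, 0, 0, -Real.exp (z 2 + 2 * z 0)]
  | 2 => !![-(Real.exp (-z 2) / 2) * partialDeriv 2 Q z, 0, 0, 0;
            0, 0, 0, 0;
            0, 0, 1 / 2, 0;
            0, 0, 0, -(Real.exp (2 * z 0) / 2)]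
  | 3 => !![-(Real.exp (-(z 2 + 2 * z 0)) / 2) * partialDeriv 3 Q z, 0, 0, 1;
            0, 0, 0, 0;
            0, 0, 0, 1 / 2;
            1, 0, 1 / 2, 0]

theorem christoffel_petrovMetric (hQ : IsPetrovProfile Q) (z : Pt 4) (a b c : Fin 4) :
    christoffel (petrovMetric Q) z a b c = petrovChristoffel Q z a b c := by
  simp only [christoffel, petrovMetric_inv, pd_eq_partialDeriv, partialDeriv_petrovMetric,
    Fin.sum_univ_four]
  have hr := congrFun hQ.partialDeriv_r z
  fin_cases a <;> fin_cases b <;> fin_cases c <;>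
    simp [petrovChristoffel, hr, mul_left_comm (Real.exp _), ← Real.exp_add] <;> ring

theorem IsPetrovProfile.isBalancedScalar (hQ : IsPetrovProfile Q) : IsBalancedScalar 2 Q :=
  .of_partialDeriv le_rfl hQ.contDiff <|
    hQ.partialDeriv_r ▸ .of_partialDeriv_eq_zero (by simp) (by fun_prop) (by simp)

theorem hasBalancedConnection_petrovMetric (hQ : IsPetrovProfile Q) :
    HasBalancedConnection (petrovMetric Q) := by
  have hzero : ∀ w, IsBalancedScalar w fun _ : Pt 4 => (0 : ℝ) := .zero
  have hindep : ∀ {w : ℤ} {f : Pt 4 → ℝ}, 0 ≤ w → ContDiff ℝ (⊤ : ℕ∞) f →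
      (∀ z, partialDeriv 1 f z = 0) → IsBalancedScalar w f :=
    IsBalancedScalar.of_partialDeriv_eq_zero
  have hmul : ∀ {w : ℤ} {f h : Pt 4 → ℝ}, IsBalancedScalar 0 f → IsBalancedScalar w h →
      IsBalancedScalar w fun z => f z * h z := fun hf hh => (hf.smul hh).mono (by simp)
  have hQx : IsBalancedScalar 2 (partialDeriv 2 Q) := hQ.isBalancedScalar.partialDeriv 2
  have hQy : IsBalancedScalar 2 (partialDeriv 3 Q) := hQ.isBalancedScalar.partialDeriv 3
  have hx : IsBalancedScalar 1 fun z : Pt 4 => z 2 :=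
    hindep (by simp) (by fun_prop) (by simp)
  have huu : IsBalancedScalar 3 fun z => partialDeriv 0 Q z + z 2 * Q z :=
    (hQ.isBalancedScalar.partialDeriv 0).add (hx.smul hQ.isBalancedScalar)
  simp only [HasBalancedConnection, christoffel_petrovMetric hQ, forall_fin_four,
    petrovChristoffel, Matrix.of_apply, Matrix.cons_val, hzero, and_true, true_and]
  constructorm* _ ∧ _
  all_goals try first
    | refine hmul ?_ huu
    | refine hmul ?_ hQx
    | refine hmul ?_ hQy
  all_goals
    refine hindep (by decide) (by fun_prop) fun z => ?_
    simp (disch := fun_prop) [div_eq_mul_inv, partialDeriv_neg, partialDeriv_mul,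
      partialDeriv_exp, partialDeriv_add]

end PetrovConnection

section Curvature

variable {n : ℕ} {g : MetricField n}

/-- The Riemann tensor `Rᵉ_{bcd}` with its natural index position. -/
def curvature (g : MetricField n) (x : Pt n) (e b c d : Fin n) : ℝ :=
  pd (fun y => christoffel g y e d b) c x - pd (fun y => christoffel g y e c b) d x +
    ∑ f, (christoffel g x e c f * christoffel g x f d b -
      christoffel g x e d f * christoffel g x f c b)

theorem riemann_eq_sum_curvature (g : MetricField n) (x : Pt n) (idx : Fin 4 → Fin n) :
    riemann g x idx = ∑ e, g x (idx 0) e * curvature g x e (idx 1) (idx 2) (idx 3) :=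
  rfl

theorem curvature_swap (g : MetricField n) (x : Pt n) (e b c d : Fin n) :
    curvature g x e b d c = -curvature g x e b c d := by
  simp only [curvature, Finset.sum_sub_distrib]
  ring

theorem ricci_eq_sum_curvature {x : Pt n} (hsymm : (g x).IsSymm) (hdet : IsUnit (g x).det)
    (b d : Fin n) : ricci g x b d = ∑ a, curvature g x a b a d := by
  have hinv : ∀ c e, ∑ a, (g x)⁻¹ a c * g x a e = if c = e then 1 else 0 := by
    have h : (g x)⁻¹.transpose * g x = 1 := by
      rw [Matrix.transpose_nonsing_inv, hsymm, Matrix.nonsing_inv_mul _ hdet]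
    exact fun c e => by simpa [Matrix.mul_apply, Matrix.one_apply] using congrFun (congrFun h c) e
  calc ricci g x b d
      = ∑ c, ∑ e, (∑ a, (g x)⁻¹ a c * g x a e) * curvature g x e b c d := by
        simp only [ricci, riemann_eq_sum_curvature, Finset.mul_sum, Finset.sum_mul]
        rw [Finset.sum_comm]
        refine Finset.sum_congr rfl fun c _ => ?_
        rw [Finset.sum_comm]
        simp [mul_assoc]
    _ = ∑ a, curvature g x a b a d := by simp [hinv]

theorem isBalancedScalar_curvature [NeZero n] (hg : HasBalancedConnection g) (e b c d : Fin n) :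
    IsBalancedScalar (coordWeight e - coordWeight b - coordWeight c - coordWeight d)
      fun x => curvature g x e b c d := by
  have hderiv : ∀ c d, IsBalancedScalar
      (coordWeight e - coordWeight b - coordWeight c - coordWeight d)
      (partialDeriv c fun y => christoffel g y e d b) := fun c d =>
    ((hg e d b).partialDeriv c).mono (by omega)
  have hmul : ∀ c d f, IsBalancedScalar
      (coordWeight e - coordWeight b - coordWeight c - coordWeight d)
      fun x => christoffel g x e c f * christoffel g x f d b := fun c d f =>
    ((hg e c f).smul (hg f d b)).mono (by omega)
  exact ((hderiv c d).sub ((hderiv d c).mono (by omega))).add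
    (.sum fun f _ => (hmul c d f).sub ((hmul d c f).mono (by omega)))

/-- The conditions on a symmetric nondegenerate metric that make raising and lowering of indices
compatible with the boost weights of coordinate components. -/
structure IsBoostAdapted (g : MetricField n) : Prop where
  isSymm : ∀ x, (g x).IsSymm
  isUnit_det : ∀ x, IsUnit (g x).det
  apply_eq_zero : ∀ x a b, 0 < coordWeight a + coordWeight b → g x a b = 0
  hasBalancedInverse : HasBalancedInverse g

/-- All components of `Rᵉ_{bcd}` of nonnegative boost weight vanish. -/
def HasTypeIIICurvature (g : MetricField n) : Prop :=
  ∀ x e b c d, coordWeight e ≤ coordWeight b + coordWeight c + coordWeight d →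
    curvature g x e b c d = 0

namespace HasTypeIIICurvature

theorem riemann_eq_zero (hR : HasTypeIIICurvature g) (hg : IsBoostAdapted g) (x : Pt n)
    (idx : Fin 4 → Fin n) (h : -1 < boostWeight idx) : riemann g x idx = 0 := by
  rw [boostWeight, Fin.sum_univ_four] at h
  refine Finset.sum_eq_zero fun e _ => ?_
  by_cases he : 0 < coordWeight (idx 0) + coordWeight e
  · rw [hg.apply_eq_zero x _ _ he, zero_mul]
  · exact mul_eq_zero_of_right _ (hR x _ _ _ _ (by omega))

theorem ricci_eq_zero (hR : HasTypeIIICurvature g) (hg : IsBoostAdapted g) (x : Pt n)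
    (b d : Fin n) (h : 0 ≤ coordWeight b + coordWeight d) : ricci g x b d = 0 := by
  rw [ricci_eq_sum_curvature (hg.isSymm x) (hg.isUnit_det x)]
  exact Finset.sum_eq_zero fun a _ => hR x _ _ _ _ (by omega)

theorem ricciScalar_eq_zero (hR : HasTypeIIICurvature g) (hg : IsBoostAdapted g) (x : Pt n) :
    ricciScalar g x = 0 := by
  refine Finset.sum_eq_zero fun b _ => Finset.sum_eq_zero fun d _ => ?_
  by_cases h : coordWeight b + coordWeight d < 0
  · rw [hg.hasBalancedInverse x b d h, zero_mul]
  · rw [hR.ricci_eq_zero hg x b d (not_lt.1 h), mul_zero]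

theorem coordBoostOrderLE_weyl (hR : HasTypeIIICurvature g) (hg : IsBoostAdapted g)
    (hRic : ∀ x b d, -2 < coordWeight b + coordWeight d → ricci g x b d = 0) :
    CoordBoostOrderLE (weyl g) (-1) := by
  intro x idx h
  have hprod : ∀ i j k l, -1 < coordWeight i + coordWeight j + coordWeight k + coordWeight l →
      g x i j * ricci g x k l = 0 := fun i j k l h => by
    by_cases hij : 0 < coordWeight i + coordWeight j
    · rw [hg.apply_eq_zero x i j hij, zero_mul]
    · rw [hRic x k l (by omega), mul_zero]
  have hriemann := hR.riemann_eq_zero hg x idx h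
  rw [boostWeight, Fin.sum_univ_four] at h
  rw [weyl, hriemann, hR.ricciScalar_eq_zero hg, hprod _ _ _ _ (by omega),
    hprod _ _ _ _ (by omega), hprod _ _ _ _ (by omega), hprod _ _ _ _ (by omega)]
  simp

end HasTypeIIICurvature

end Curvature

section PetrovCurvature

variable {Q : Pt 4 → ℝ}

theorem isBoostAdapted_petrovMetric (Q : Pt 4 → ℝ) : IsBoostAdapted (petrovMetric Q) where
  isSymm z := by
    ext a b
    fin_cases a <;> fin_cases b <;> simp [petrovMetric]
  isUnit_det z := by simp [det_petrovMetric]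
  apply_eq_zero z := by simp [forall_fin_four, petrovMetric, coordWeight]
  hasBalancedInverse := hasBalancedInverse_petrovMetric Q

theorem curvature_petrovMetric (hQ : IsPetrovProfile Q) (z : Pt 4) (e b c d : Fin 4) :
    curvature (petrovMetric Q) z e b c d =
      partialDeriv c (fun y => petrovChristoffel Q y e d b) z -
        partialDeriv d (fun y => petrovChristoffel Q y e c b) z +
        ∑ f, (petrovChristoffel Q z e c f * petrovChristoffel Q z f d b -
          petrovChristoffel Q z e d f * petrovChristoffel Q z f c b) := by
  simp only [curvature, christoffel_petrovMetric hQ, pd_eq_partialDeriv]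

theorem hasTypeIIICurvature_petrovMetric (hQ : IsPetrovProfile Q) :
    HasTypeIIICurvature (petrovMetric Q) := by
  intro z e b c d hw
  rcases hw.lt_or_eq with hlt | heq
  · have hR := isBalancedScalar_curvature (hasBalancedConnection_petrovMetric hQ) e b c d
    exact congrFun (hR.eq_zero (by omega)) z
  wlog hcd : c < d generalizing c d
  · rcases (not_lt.1 hcd).lt_or_eq with hdc | rfl
    · rw [curvature_swap, this d c (by omega) (by omega) hdc, neg_zero]
    · linarith [curvature_swap (petrovMetric Q) z e b d d]
  rw [curvature_petrovMetric hQ, Fin.sum_univ_four]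
  fin_cases e <;> fin_cases b <;> fin_cases c <;> fin_cases d <;>
    first
    | exact absurd heq (by decide)
    | exact absurd hcd (by decide)
    | simp (disch := fun_prop) [petrovChristoffel, div_eq_mul_inv, partialDeriv_neg,
        partialDeriv_mul, partialDeriv_exp, partialDeriv_add] <;> ring

theorem ricci_petrovMetric (hQ : IsPetrovProfile Q) (z : Pt 4) (b d : Fin 4) :
    ricci (petrovMetric Q) z b d =
      if b = 0 ∧ d = 0 then
        -(1 / 2) * (Real.exp (-z 2) * partialDeriv 2 (partialDeriv 2 Q) z +
          Real.exp (-(z 2 + 2 * z 0)) * partialDeriv 3 (partialDeriv 3 Q) z) - 1 - z 2 / 2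
      else 0 := by
  by_cases hw : 0 ≤ coordWeight b + coordWeight d
  · rw [(hasTypeIIICurvature_petrovMetric hQ).ricci_eq_zero (isBoostAdapted_petrovMetric Q)
      z b d hw, if_neg]
    rintro ⟨rfl, rfl⟩
    exact absurd hw (by decide)
  have hQ' : Differentiable ℝ Q := hQ.contDiff.differentiable (by simp)
  have hdQ : ∀ a, Differentiable ℝ (partialDeriv a Q) := fun a =>
    (contDiff_partialDeriv hQ.contDiff a).differentiable (by simp)
  have hr : ∀ a, partialDeriv 1 (partialDeriv a Q) z = if 2 = a then 1 else 0 := fun a => by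
    rw [partialDeriv_comm hQ.contDiff, hQ.partialDeriv_r, partialDeriv_coord]
  have hQr : partialDeriv 1 Q z = z 2 := congrFun hQ.partialDeriv_r z
  rw [ricci_eq_sum_curvature ((isBoostAdapted_petrovMetric Q).isSymm z)
    ((isBoostAdapted_petrovMetric Q).isUnit_det z)]
  simp only [curvature_petrovMetric hQ, Fin.sum_univ_four]
  fin_cases b <;> fin_cases d <;>
    first
    | exact absurd (by decide) hw
    | simp (disch := fun_prop) [petrovChristoffel, div_eq_mul_inv, partialDeriv_neg,
        partialDeriv_mul, partialDeriv_exp, partialDeriv_add, hr, hQr] <;> ring_nf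

end PetrovCurvature

section NullForm

theorem sum_fin_one_arrow {α M : Type*} [Fintype α] [AddCommMonoid M]
    (f : (Fin 1 → α) → M) : ∑ v, f v = ∑ a, f ![a] :=
  Fintype.sum_equiv (Equiv.funUnique (Fin 1) α) _ _ fun _ => congrArg f (List.ofFn_inj.1 rfl)

theorem sum_fin_two_arrow {α M : Type*} [Fintype α] [AddCommMonoid M] (f : (Fin 2 → α) → M) :
    ∑ v, f v = ∑ a, ∑ b, f ![a, b] := by
  rw [← Fintype.sum_prod_type']
  exact Fintype.sum_equiv (finTwoArrowEquiv α) _ _ fun _ => congrArg f (List.ofFn_inj.1 rfl)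

/-- The null 2-form `du ∧ (a dx + b dy)`. -/
def nullForm (a b : Pt 4 → ℝ) : TensorField 4 2 :=
  duWedge (oneForm fun z => ![0, 0, a z, b z])

theorem nullForm_apply (a b : Pt 4 → ℝ) (z : Pt 4) (idx : Fin 2 → Fin 4) :
    nullForm a b z idx =
      !![0, 0, a z, b z;
         0, 0, 0, 0;
         -a z, 0, 0, 0;
         -b z, 0, 0, 0] (idx 0) (idx 1) := by
  simp only [nullForm, duWedge, oneForm]
  generalize hi : idx 0 = i
  generalize hj : idx 1 = j
  fin_cases i <;> fin_cases j <;> simp [hi, hj, Fin.succAbove]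

theorem extD_two_apply {n : ℕ} (F : TensorField n 2) (x : Pt n) (idx : Fin 3 → Fin n) :
    extD F x idx = partialDeriv (idx 0) (fun y => F y ![idx 1, idx 2]) x -
      partialDeriv (idx 1) (fun y => F y ![idx 0, idx 2]) x +
      partialDeriv (idx 2) (fun y => F y ![idx 0, idx 1]) x := by
  have h : ∀ m : Fin 3, (fun i => idx (m.succAbove i)) =
      ![idx (m.succAbove 0), idx (m.succAbove 1)] := fun m => List.ofFn_inj.1 rfl
  rw [extD, Fin.sum_univ_three]
  simp only [h, pd_eq_partialDeriv]
  simp [Fin.succAbove, sub_eq_add_neg]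

theorem extD_nullForm_eq_zero {a b : Pt 4 → ℝ} {z : Pt 4} (ha : partialDeriv 1 a z = 0)
    (hb : partialDeriv 1 b z = 0) (hab : partialDeriv 2 b z = partialDeriv 3 a z)
    (idx : Fin 3 → Fin 4) : extD (nullForm a b) z idx = 0 := by
  simp only [extD_two_apply, nullForm_apply, Matrix.cons_val]
  generalize idx 0 = i
  generalize idx 1 = j
  generalize idx 2 = k
  fin_cases i <;> fin_cases j <;> fin_cases k <;> simp [partialDeriv_neg, ha, hb, hab]

theorem raiseAll_nullForm (Q a b : Pt 4 → ℝ) (z : Pt 4) (idx : Fin 2 → Fin 4) :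
    raiseAll (petrovMetric Q) (nullForm a b) z idx =
      !![0, 0, 0, 0;
         0, 0, Real.exp (-z 2) * a z, Real.exp (-(z 2 + 2 * z 0)) * b z;
         0, -(Real.exp (-z 2) * a z), 0, 0;
         0, -(Real.exp (-(z 2 + 2 * z 0)) * b z), 0, 0] (idx 0) (idx 1) := by
  simp only [raiseAll, petrovMetric_inv, sum_fin_two_arrow, nullForm_apply, Fin.prod_univ_two]
  generalize idx 0 = i
  generalize idx 1 = j
  fin_cases i <;> fin_cases j <;> simp [Fin.sum_univ_four]

theorem emTensor_nullForm (Q a b : Pt 4 → ℝ) (z : Pt 4) (i j : Fin 4) :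
    emTensor (petrovMetric Q) (nullForm a b) z i j =
      if i = 0 ∧ j = 0 then
        Real.exp (-z 2) * a z ^ 2 + Real.exp (-(z 2 + 2 * z 0)) * b z ^ 2
      else 0 := by
  have hinvariant : ∑ v : Fin (1 + 1) → Fin 4,
      nullForm a b z v * raiseAll (petrovMetric Q) (nullForm a b) z v = 0 := by
    refine (sum_fin_two_arrow _).trans ?_
    simp [raiseAll_nullForm, nullForm_apply, Fin.sum_univ_four]
  rw [emTensor, hinvariant]
  simp only [sum_fin_one_arrow, nullForm_apply, petrovMetric_inv, Fin.prod_univ_one,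
    Fin.cons_zero, Fin.cons_one, Matrix.cons_val]
  fin_cases i <;> fin_cases j <;> simp [Fin.sum_univ_four]
  ring

theorem hodge_nullForm (h : 2 + 2 = 4) (Q a b : Pt 4 → ℝ) :
    hodge h (petrovMetric Q) (nullForm a b) =
      nullForm (fun z => -(Real.exp (-z 0) * b z)) (fun z => Real.exp (z 0) * a z) := by
  funext z idx
  have hvolume : Real.sqrt |(petrovMetric Q z).det| = Real.exp (z 2 + z 0) := by
    rw [det_petrovMetric, abs_neg, abs_sq, Real.sqrt_sq (Real.exp_pos _).le]
  have hx : ∀ t, Real.exp (-z 2) * t * Real.exp (z 2 + z 0) = Real.exp (z 0) * t := fun t => by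
    rw [mul_right_comm, ← Real.exp_add, neg_add_cancel_left]
  have hy : ∀ t, Real.exp (-(z 2 + 2 * z 0)) * t * Real.exp (z 2 + z 0) = Real.exp (-z 0) * t :=
    fun t => by rw [mul_right_comm, ← Real.exp_add]; ring_nf
  have happend : ∀ i j, (fun m => Fin.append ![i, j] idx (Fin.cast h.symm m)) =
      ![i, j, idx 0, idx 1] := fun i j => List.ofFn_inj.1 rfl
  have hone_two : ∀ i j : Fin 4, permSign ![1, 2, i, j] =
      if i = 0 ∧ j = 3 then 1 else if i = 3 ∧ j = 0 then -1 else 0 := by decide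
  have hone_three : ∀ i j : Fin 4, permSign ![1, 3, i, j] =
      if i = 0 ∧ j = 2 then -1 else if i = 2 ∧ j = 0 then 1 else 0 := by decide
  have htwo_one : ∀ i j : Fin 4, permSign ![2, 1, i, j] = -permSign ![1, 2, i, j] := by decide
  have hthree_one : ∀ i j : Fin 4, permSign ![3, 1, i, j] = -permSign ![1, 3, i, j] := by decide
  simp only [hodge, sum_fin_two_arrow, raiseAll_nullForm, hvolume, happend, nullForm_apply]
  generalize idx 0 = i
  generalize idx 1 = j
  fin_cases i <;> fin_cases j <;>
    simp [-neg_add_rev, Fin.sum_univ_four, hone_two, hone_three, htwo_one, hthree_one, hx, hy] <;>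
    ring

end NullForm

section PetrovEM

/-- The profile `g_{uu}` of the metric `petrovEM κ₀ c`. -/
def petrovProfile (κ₀ : ℝ) (c : ℝ → ℝ) (z : Pt 4) : ℝ :=
  z 2 * z 1 - z 2 * Real.exp (z 2) - 2 * κ₀ * Real.exp (z 2) * c (z 0) ^ 2

theorem petrovEM_eq_petrovMetric (κ₀ : ℝ) (c : ℝ → ℝ) :
    petrovEM κ₀ c = petrovMetric (petrovProfile κ₀ c) := by
  ext z a b
  fin_cases a <;> fin_cases b <;> simp [petrovEM, petrovMetric, petrovProfile]

theorem petrovF_eq_nullForm (c : ℝ → ℝ) :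
    petrovF c = nullForm
      (fun z => -(Real.exp (z 2 / 2) * c (z 0) * Real.cos (z 3 * Real.exp (z 0) / 2)))
      (fun z =>
        Real.exp (z 2 / 2) * c (z 0) * Real.exp (z 0) * Real.sin (z 3 * Real.exp (z 0) / 2)) := by
  funext z idx
  simp only [petrovF, nullForm_apply]
  generalize idx 0 = i
  generalize idx 1 = j
  fin_cases i <;> fin_cases j <;> simp [petrovA]

variable {c : ℝ → ℝ}

theorem partialDeriv_petrovProfile (hc : Differentiable ℝ c) (κ₀ : ℝ) (a : Fin 4) (z : Pt 4) :
    partialDeriv a (petrovProfile κ₀ c) z =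
      ![-(4 * κ₀ * Real.exp (z 2) * c (z 0) * deriv c (z 0)), z 2,
        z 1 - (z 2 + 1) * Real.exp (z 2) - 2 * κ₀ * Real.exp (z 2) * c (z 0) ^ 2, 0] a := by
  unfold petrovProfile
  fin_cases a <;>
    simp (disch := fun_prop) [partialDeriv_sub, partialDeriv_mul, partialDeriv_exp, pow_two,
      partialDeriv_comp_coord hc] <;> ring

theorem isPetrovProfile_petrovProfile (hc : ContDiff ℝ (⊤ : ℕ∞) c) (κ₀ : ℝ) :
    IsPetrovProfile (petrovProfile κ₀ c) where
  contDiff := by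
    unfold petrovProfile
    fun_prop
  partialDeriv_r := by
    funext z
    simp [partialDeriv_petrovProfile (hc.differentiable (by simp))]

theorem ricci_petrovEM (hc : ContDiff ℝ (⊤ : ℕ∞) c) (κ₀ : ℝ) (z : Pt 4) (a b : Fin 4) :
    ricci (petrovEM κ₀ c) z a b = if a = 0 ∧ b = 0 then κ₀ * c (z 0) ^ 2 else 0 := by
  have hc' : Differentiable ℝ c := hc.differentiable (by simp)
  have hd := partialDeriv_petrovProfile hc' κ₀
  have hxx : partialDeriv 2 (partialDeriv 2 (petrovProfile κ₀ c)) z =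
      -((z 2 + 2) * Real.exp (z 2)) - 2 * κ₀ * Real.exp (z 2) * c (z 0) ^ 2 := by
    rw [show partialDeriv 2 (petrovProfile κ₀ c) = _ from funext (hd 2)]
    simp (disch := fun_prop) [partialDeriv_sub, partialDeriv_add, partialDeriv_mul,
      partialDeriv_exp, pow_two, partialDeriv_comp_coord hc']
    ring
  have hyy : partialDeriv 3 (partialDeriv 3 (petrovProfile κ₀ c)) z = 0 := by
    rw [show partialDeriv 3 (petrovProfile κ₀ c) = _ from funext (hd 3)]
    simp
  rw [petrovEM_eq_petrovMetric, ricci_petrovMetric (isPetrovProfile_petrovProfile hc κ₀), hxx, hyy]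
  have hexp : Real.exp (-z 2) * Real.exp (z 2) = 1 := by simp [← Real.exp_add]
  congr 1
  linear_combination (z 2 / 2 + 1 + κ₀ * c (z 0) ^ 2) * hexp

theorem emTensor_petrovF (κ₀ : ℝ) (c : ℝ → ℝ) (z : Pt 4) (a b : Fin 4) :
    emTensor (petrovEM κ₀ c) (petrovF c) z a b = if a = 0 ∧ b = 0 then c (z 0) ^ 2 else 0 := by
  rw [petrovEM_eq_petrovMetric, petrovF_eq_nullForm, emTensor_nullForm]
  congr 1
  have hx : Real.exp (-z 2) * Real.exp (z 2 / 2) ^ 2 = 1 := by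
    rw [← Real.exp_nat_mul, ← Real.exp_add, Real.exp_eq_one_iff]
    ring
  have hy : Real.exp (-(z 2 + 2 * z 0)) * (Real.exp (z 2 / 2) * Real.exp (z 0)) ^ 2 = 1 := by
    rw [← Real.exp_add, ← Real.exp_nat_mul, ← Real.exp_add, Real.exp_eq_one_iff]
    ring
  linear_combination c (z 0) ^ 2 * Real.cos (z 3 * Real.exp (z 0) / 2) ^ 2 * hx +
    c (z 0) ^ 2 * Real.sin (z 3 * Real.exp (z 0) / 2) ^ 2 * hy +
    c (z 0) ^ 2 * Real.cos_sq_add_sin_sq (z 3 * Real.exp (z 0) / 2)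

theorem einstein_petrovEM (hc : ContDiff ℝ (⊤ : ℕ∞) c) (κ₀ : ℝ) (z : Pt 4) (a b : Fin 4) :
    ricci (petrovEM κ₀ c) z a b -
      1 / 2 * ricciScalar (petrovEM κ₀ c) z * petrovEM κ₀ c z a b =
      κ₀ * emTensor (petrovEM κ₀ c) (petrovF c) z a b := by
  have hscalar : ricciScalar (petrovEM κ₀ c) z = 0 := by
    rw [petrovEM_eq_petrovMetric]
    have hR := hasTypeIIICurvature_petrovMetric (isPetrovProfile_petrovProfile hc κ₀)
    exact hR.ricciScalar_eq_zero (isBoostAdapted_petrovMetric _) z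
  rw [ricci_petrovEM hc, emTensor_petrovF, hscalar]
  split_ifs <;> ring

theorem boostOrderLE_weyl_petrovEM (hc : ContDiff ℝ (⊤ : ℕ∞) c) (κ₀ : ℝ) :
    BoostOrderLE (petrovEM κ₀ c) ellR (weyl (petrovEM κ₀ c)) (-1) := by
  have hweyl : CoordBoostOrderLE (weyl (petrovEM κ₀ c)) (-1) := by
    have hricci := ricci_petrovEM hc κ₀
    rw [petrovEM_eq_petrovMetric] at hricci ⊢
    refine (hasTypeIIICurvature_petrovMetric
      (isPetrovProfile_petrovProfile hc κ₀)).coordBoostOrderLE_weyl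
        (isBoostAdapted_petrovMetric _) fun z b d h => ?_
    rw [hricci, if_neg]
    rintro ⟨rfl, rfl⟩
    exact absurd h (by decide)
  have hellR : ∀ z, ellR z = Pi.single 1 1 := fun z => by
    ext a
    simp [ellR, Pi.single_apply]
  refine hweyl.boostOrderLE hellR fun z Y => ?_
  simp [hellR, petrovEM_eq_petrovMetric, gdot, petrovMetric, Fin.sum_univ_four]

theorem maxwellEqs_petrovF (h : 2 + 2 = 4) (hc : Differentiable ℝ c) (Q : Pt 4 → ℝ) :
    MaxwellEqs h (petrovMetric Q) (petrovF c) := by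
  rw [petrovF_eq_nullForm, MaxwellEqs, hodge_nullForm]
  have hcancel : ∀ t s r : ℝ, Real.exp (-t) * (s * Real.exp t * r) = s * r := fun t s r => by
    rw [mul_right_comm s, mul_left_comm, ← Real.exp_add, neg_add_cancel, Real.exp_zero, mul_one]
  simp only [hcancel]
  constructor <;> intro z <;> refine extD_nullForm_eq_zero ?_ ?_ ?_ <;>
    simp (disch := fun_prop) [partialDeriv_neg, partialDeriv_mul, partialDeriv_exp, div_eq_mul_inv,
      partialDeriv_comp_coord hc, partialDeriv_scomp (φ := Real.cos),
      partialDeriv_scomp (φ := Real.sin)] <;>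
    ring_nf

end PetrovEM

section NullSelfDual

variable {k : ℕ} {Q : Pt 4 → ℝ} {T : Pt 4 → (Fin k → Fin 4) → ℂ} {b : ℤ}

/-- The factor `i eᵘ` by which the `y`-component of a self-dual tensor differs from its
`x`-component; `∂_y - i eᵘ ∂_x` is a null vector. -/
def rotation (z : Pt 4) : ℂ :=
  Complex.I * Complex.exp (z 0)

theorem contDiff_ofReal_coord (i : Fin 4) :
    ContDiff ℝ (⊤ : ℕ∞) fun z : Pt 4 => (z i : ℂ) :=
  Complex.ofRealCLM.contDiff.comp (contDiff_apply ℝ ℝ i)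

theorem contDiff_rotation : ContDiff ℝ (⊤ : ℕ∞) rotation :=
  contDiff_const.mul (contDiff_ofReal_coord 0).cexp

theorem partialDeriv_rotation (a : Fin 4) (z : Pt 4) :
    partialDeriv a rotation z = if 0 = a then rotation z else 0 := by
  have hcoord : Differentiable ℝ fun z : Pt 4 => (z 0 : ℂ) :=
    (contDiff_ofReal_coord 0).differentiable (by simp)
  unfold rotation
  rw [partialDeriv_mul a (by fun_prop) (hcoord.cexp z), partialDeriv_cexp a (hcoord z),
    partialDeriv_ofReal a (by fun_prop), partialDeriv_coord]
  split_ifs <;> simp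

theorem partialDeriv_rotation_mul {f : Pt 4 → ℂ} {a : Fin 4} {z : Pt 4}
    (hf : DifferentiableAt ℝ f z) (ha : 0 ≠ a) :
    partialDeriv a (fun y => rotation y * f y) z = rotation z * partialDeriv a f z := by
  rw [partialDeriv_mul a (contDiff_rotation.differentiable (by simp) z) hf, partialDeriv_rotation,
    if_neg ha, zero_mul, zero_add]

theorem rotation_mul_self (z : Pt 4) : rotation z * rotation z = -Complex.exp (2 * z 0) := by
  rw [rotation, mul_mul_mul_comm, Complex.I_mul_I, two_mul, Complex.exp_add, neg_one_mul]

/-- Balanced complex tensors of boost order `b` whose components of weight exactly `b` have no `r`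
index, are annihilated by the null vector `∂_y - i eᵘ ∂_x` in every slot, and are holomorphic along
the wave fronts. -/
structure IsNullSelfDual (T : Pt 4 → (Fin k → Fin 4) → ℂ) (b : ℤ) : Prop where
  isBalanced : IsBalanced T b
  eq_zero_of_apply_eq_one : ∀ z idx m, boostWeight idx = b → idx m = 1 → T z idx = 0
  update_three : ∀ z idx m, boostWeight idx = b → idx m = 2 →
    T z (Function.update idx m 3) = rotation z * T z idx
  partialDeriv_three : ∀ z idx, boostWeight idx = b →
    partialDeriv 3 (fun y => T y idx) z = rotation z * partialDeriv 2 (fun y => T y idx) z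

theorem coordWeight_ne_zero_or (a : Fin 4) : coordWeight a ≠ 0 ∨ a = 2 ∨ a = 3 := by
  fin_cases a <;> simp [coordWeight]

theorem petrovChristoffel_eq_zero (Q : Pt 4 → ℝ) (z : Pt 4) (e a c : Fin 4)
    (hw : coordWeight e = coordWeight a + coordWeight c)
    (h : coordWeight a ≠ 0 ∨ coordWeight c ≠ 0) : petrovChristoffel Q z e a c = 0 := by
  revert hw h
  fin_cases e <;> fin_cases a <;> fin_cases c <;> simp [coordWeight, petrovChristoffel]

/-- The number of transverse indices in a multi-index. -/
def transverseCard (idx : Fin k → Fin 4) : ℕ :=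
  (Finset.univ.filter fun m => coordWeight (idx m) = 0).card

namespace IsBalanced

theorem christoffel_smul_eq_zero (hT : IsBalanced T b) (hQ : IsPetrovProfile Q) (z : Pt 4)
    (a e : Fin 4) (idx : Fin k → Fin 4) (m : Fin k) (hidx : coordWeight a + boostWeight idx = b)
    (h : coordWeight a ≠ 0 ∨ coordWeight (idx m) ≠ 0 ∨ coordWeight e ≠ 0) :
    christoffel (petrovMetric Q) z e a (idx m) • T z (Function.update idx m e) = 0 := by
  have hΓ := hasBalancedConnection_petrovMetric hQ e a (idx m)
  rcases lt_trichotomy (coordWeight e) (coordWeight a + coordWeight (idx m)) with hw | hw | hw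
  · rw [show christoffel (petrovMetric Q) z e a (idx m) = 0 from
      congrFun (hΓ.eq_zero (by omega)) z, zero_smul]
  · rw [christoffel_petrovMetric hQ, petrovChristoffel_eq_zero Q z e a (idx m) hw (by omega),
      zero_smul]
  · rw [hT.coordBoostOrderLE z _ (by rw [boostWeight_update]; omega), smul_zero]

theorem covDeriv_eq_zero (hT : IsBalanced T b) (hQ : IsPetrovProfile Q) (z : Pt 4)
    (idx : Fin (k + 1) → Fin 4) (hidx : boostWeight idx = b) (h0 : coordWeight (idx 0) ≠ 0) :
    VSI.covDeriv (petrovMetric Q) T z idx = 0 := by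
  rw [boostWeight_eq_add_tail] at hidx
  have hderiv : partialDeriv (idx 0) (fun y => T y (Fin.tail idx)) = 0 := by
    by_cases hone : idx 0 = 1
    · rw [hone] at hidx ⊢
      have hweight : coordWeight (1 : Fin 4) = 1 := rfl
      exact (hT (Fin.tail idx)).partialDeriv_eq_zero (by omega)
    · have hzero : coordWeight (idx 0) = -1 := by
        revert h0 hone
        generalize idx 0 = a
        fin_cases a <;> simp [coordWeight]
      rw [(hT (Fin.tail idx)).eq_zero (by omega)]
      exact funext fun y => partialDeriv_const _ _ y
  rw [VSI.covDeriv, hderiv, Finset.sum_eq_zero, sub_zero, Pi.zero_apply]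
  exact fun m _ => Finset.sum_eq_zero fun e _ =>
    hT.christoffel_smul_eq_zero hQ z _ e _ m hidx (.inl h0)

theorem covDeriv_of_apply_zero_eq_two (hT : IsBalanced T b) (hQ : IsPetrovProfile Q) (z : Pt 4)
    (idx : Fin (k + 1) → Fin 4) (hidx : boostWeight idx = b) (h0 : idx 0 = 2) :
    VSI.covDeriv (petrovMetric Q) T z idx =
      partialDeriv 2 (fun y => T y (Fin.tail idx)) z -
        transverseCard (Fin.tail idx) / 2 * T z (Fin.tail idx) := by
  rw [boostWeight_eq_add_tail, h0] at hidx
  have hslot : ∀ m, ∑ e, christoffel (petrovMetric Q) z e 2 (Fin.tail idx m) •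
      T z (Function.update (Fin.tail idx) m e) =
        if coordWeight (Fin.tail idx m) = 0 then 1 / 2 * T z (Fin.tail idx) else 0 := fun m => by
    have hvanish := hT.christoffel_smul_eq_zero hQ z 2 (idx := Fin.tail idx) (m := m) (hidx := hidx)
    split_ifs with hm
    · rw [Fin.sum_univ_four, hvanish 0 (by simp [coordWeight]), hvanish 1 (by simp [coordWeight])]
      rcases (coordWeight_ne_zero_or (Fin.tail idx m)).resolve_left (not_not.2 hm) with h | h <;>
        · have hself := Function.update_eq_self m (Fin.tail idx)
          rw [h] at hself ⊢
          simp [christoffel_petrovMetric hQ, petrovChristoffel, hself]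
    · exact Finset.sum_eq_zero fun e _ => hvanish e (.inr (.inl hm))
  simp only [VSI.covDeriv, h0, hslot]
  rw [← Finset.sum_filter, Finset.sum_const, transverseCard, nsmul_eq_mul]
  ring

end IsBalanced

namespace IsNullSelfDual

theorem sum_christoffel_smul (hT : IsNullSelfDual T b) (hQ : IsPetrovProfile Q) (z : Pt 4)
    (idx : Fin k → Fin 4) (hidx : boostWeight idx = b) (m : Fin k) :
    ∑ e, christoffel (petrovMetric Q) z e 3 (idx m) • T z (Function.update idx m e) =
      if coordWeight (idx m) = 0 then 1 / 2 * (rotation z * T z idx) else 0 := by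
  have hvanish := hT.isBalanced.christoffel_smul_eq_zero hQ z 3 (idx := idx) (m := m)
    (hidx := hidx ▸ zero_add _)
  split_ifs with hm
  · rw [Fin.sum_univ_four, hvanish 0 (by simp [coordWeight]), hvanish 1 (by simp [coordWeight])]
    rcases (coordWeight_ne_zero_or (idx m)).resolve_left (not_not.2 hm) with h | h
    · rw [← hT.update_three z idx m hidx h, h]
      simp [christoffel_petrovMetric hQ, petrovChristoffel]
    · have hrot := hT.update_three z (Function.update idx m 2) m
        (by simp [boostWeight_update, h, hidx, coordWeight]) (by simp)
      rw [Function.update_idem, ← h, Function.update_eq_self] at hrot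
      rw [hrot, ← mul_assoc (rotation z), rotation_mul_self, h]
      simp [christoffel_petrovMetric hQ, petrovChristoffel]
      ring
  · exact Finset.sum_eq_zero fun e _ => hvanish e (.inr (.inl hm))

theorem covDeriv_update_zero (hT : IsNullSelfDual T b) (hQ : IsPetrovProfile Q)
    (z : Pt 4) (idx : Fin (k + 1) → Fin 4) (hidx : boostWeight idx = b) (h0 : idx 0 = 2) :
    covDeriv (petrovMetric Q) T z (Function.update idx 0 3) =
      rotation z * covDeriv (petrovMetric Q) T z idx := by
  have htail : boostWeight (Fin.tail idx) = b := by
    rw [← hidx, boostWeight_eq_add_tail idx, h0]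
    exact (zero_add _).symm
  rw [hT.isBalanced.covDeriv_of_apply_zero_eq_two hQ z idx hidx h0]
  simp only [covDeriv, Function.update_self, Fin.tail_update_zero,
    hT.sum_christoffel_smul hQ z _ htail, hT.partialDeriv_three z _ htail]
  rw [← Finset.sum_filter, Finset.sum_const, transverseCard, nsmul_eq_mul]
  ring

end IsNullSelfDual

end NullSelfDual

section NullSelfDualStability

variable {k : ℕ} {Q : Pt 4 → ℝ} {T : Pt 4 → (Fin k → Fin 4) → ℂ} {b : ℤ}

theorem boostWeight_tail_of_apply_zero {idx : Fin (k + 1) → Fin 4} (hidx : boostWeight idx = b)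
    (h0 : coordWeight (idx 0) = 0) : boostWeight (Fin.tail idx) = b := by
  rw [← hidx, boostWeight_eq_add_tail idx, h0, zero_add]

theorem update_zero_two_three {idx : Fin (k + 1) → Fin 4} (h0 : idx 0 = 3) :
    Function.update (Function.update idx 0 2) 0 3 = idx := by
  rw [Function.update_idem, ← h0, Function.update_eq_self]

theorem boostWeight_update_zero_two {idx : Fin (k + 1) → Fin 4} (h0 : idx 0 = 3) :
    boostWeight (Function.update idx 0 2) = boostWeight idx := by
  simp [boostWeight_update, h0, coordWeight]

namespace IsNullSelfDual

theorem covDeriv_eq_zero_of_apply_eq_one (hT : IsNullSelfDual T b) (hQ : IsPetrovProfile Q)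
    (z : Pt 4) (idx : Fin (k + 1) → Fin 4) (m : Fin (k + 1)) (hidx : boostWeight idx = b)
    (hm : idx m = 1) : covDeriv (petrovMetric Q) T z idx = 0 := by
  wlog h0 : idx 0 = 2 generalizing idx
  · rcases coordWeight_ne_zero_or (idx 0) with h | h | h
    · exact hT.isBalanced.covDeriv_eq_zero hQ z idx hidx h
    · exact absurd h h0
    · have hm0 : m ≠ 0 := by rintro rfl; simp [h] at hm
      have hidx' : boostWeight (Function.update idx 0 2) = b := by
        rw [boostWeight_update_zero_two h, hidx]
      rw [← update_zero_two_three h,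
        hT.covDeriv_update_zero hQ z _ hidx' (Function.update_self ..),
        this _ hidx' (by rw [Function.update_of_ne hm0, hm]) (Function.update_self ..), mul_zero]
  have htail := boostWeight_tail_of_apply_zero hidx (by rw [h0]; rfl)
  cases m using Fin.cases with
  | zero => simp [h0] at hm
  | succ m =>
    have hzero : ∀ y, T y (Fin.tail idx) = 0 := fun y =>
      hT.eq_zero_of_apply_eq_one y _ m htail hm
    simp [hT.isBalanced.covDeriv_of_apply_zero_eq_two hQ z idx hidx h0, hzero]

theorem differentiable (hT : IsNullSelfDual T b) (idx : Fin k → Fin 4) :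
    Differentiable ℝ fun z => T z idx :=
  (hT.isBalanced.contDiff idx).differentiable (by simp)

theorem covDeriv_update_succ_of_apply_zero_eq_two (hT : IsNullSelfDual T b)
    (hQ : IsPetrovProfile Q) (z : Pt 4) (idx : Fin (k + 1) → Fin 4) (m : Fin k)
    (hidx : boostWeight idx = b) (h0 : idx 0 = 2) (hm : idx m.succ = 2) :
    covDeriv (petrovMetric Q) T z (Function.update idx m.succ 3) =
      rotation z * covDeriv (petrovMetric Q) T z idx := by
  have hidx' : boostWeight (Function.update idx m.succ 3) = b := by
    simp [boostWeight_update, hm, hidx, coordWeight]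
  have h0' : Function.update idx m.succ 3 0 = 2 := by
    rwa [Function.update_of_ne (Fin.succ_ne_zero m).symm]
  have htail := boostWeight_tail_of_apply_zero hidx (by rw [h0]; rfl)
  have hcard : transverseCard (Function.update (Fin.tail idx) m 3) =
      transverseCard (Fin.tail idx) := by
    refine congrArg Finset.card (Finset.filter_congr fun i _ => ?_)
    by_cases hi : i = m
    · subst hi
      simp [Fin.tail, hm, coordWeight]
    · rw [Function.update_of_ne hi]
  have hrot : (fun y => T y (Function.update (Fin.tail idx) m 3)) =
      fun y => rotation y * T y (Fin.tail idx) :=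
    funext fun y => hT.update_three y _ m htail hm
  rw [hT.isBalanced.covDeriv_of_apply_zero_eq_two hQ z idx hidx h0,
    hT.isBalanced.covDeriv_of_apply_zero_eq_two hQ z _ hidx' h0', Fin.tail_update_succ, hcard,
    hrot, partialDeriv_rotation_mul (hT.differentiable _ z) (by decide),
    hT.update_three z _ m htail hm]
  ring

theorem covDeriv_update_succ (hT : IsNullSelfDual T b) (hQ : IsPetrovProfile Q) (z : Pt 4)
    (idx : Fin (k + 1) → Fin 4) (m : Fin k) (hidx : boostWeight idx = b) (hm : idx m.succ = 2) :
    covDeriv (petrovMetric Q) T z (Function.update idx m.succ 3) =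
      rotation z * covDeriv (petrovMetric Q) T z idx := by
  have hidx' : boostWeight (Function.update idx m.succ 3) = b := by
    simp [boostWeight_update, hm, hidx, coordWeight]
  have hm0 : ∀ idx : Fin (k + 1) → Fin 4, Function.update idx m.succ 3 0 = idx 0 := fun idx =>
    Function.update_of_ne (Fin.succ_ne_zero m).symm 3 idx
  rcases coordWeight_ne_zero_or (idx 0) with h | h | h
  · rw [hT.isBalanced.covDeriv_eq_zero hQ z idx hidx h,
      hT.isBalanced.covDeriv_eq_zero hQ z _ hidx' (by rwa [hm0]), mul_zero]
  · exact hT.covDeriv_update_succ_of_apply_zero_eq_two hQ z idx m hidx h hm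
  · set idx' := Function.update idx 0 2
    have hb : boostWeight idx' = b := by rw [boostWeight_update_zero_two h, hidx]
    have h2 : idx' 0 = 2 := Function.update_self ..
    have hm' : idx' m.succ = 2 := (Function.update_of_ne (Fin.succ_ne_zero m) 2 idx).trans hm
    have hb' : boostWeight (Function.update idx' m.succ 3) = b := by
      simp [boostWeight_update, hm', hb, coordWeight]
    have hzero : Function.update idx' 0 3 = idx := update_zero_two_three h
    have hsucc : Function.update (Function.update idx' m.succ 3) 0 3 =
        Function.update idx m.succ 3 := by
      rw [Function.update_comm (Fin.succ_ne_zero m), hzero]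
    rw [← hsucc, ← hzero, hT.covDeriv_update_zero hQ z _ hb' (by rw [hm0, h2]),
      hT.covDeriv_update_zero hQ z _ hb h2,
      hT.covDeriv_update_succ_of_apply_zero_eq_two hQ z _ m hb h2 hm']

theorem partialDeriv_three_covDeriv_of_apply_zero_eq_two (hT : IsNullSelfDual T b)
    (hQ : IsPetrovProfile Q) (z : Pt 4) (idx : Fin (k + 1) → Fin 4) (hidx : boostWeight idx = b)
    (h0 : idx 0 = 2) :
    partialDeriv 3 (fun y => covDeriv (petrovMetric Q) T y idx) z =
      rotation z * partialDeriv 2 (fun y => covDeriv (petrovMetric Q) T y idx) z := by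
  have htail := boostWeight_tail_of_apply_zero hidx (by rw [h0]; rfl)
  have hcomp := hT.isBalanced.contDiff (Fin.tail idx)
  have hx : Differentiable ℝ (partialDeriv 2 fun y => T y (Fin.tail idx)) :=
    (contDiff_partialDeriv hcomp 2).differentiable (by simp)
  have hexpand : ∀ a, partialDeriv a (fun y => covDeriv (petrovMetric Q) T y idx) z =
      partialDeriv a (partialDeriv 2 fun y => T y (Fin.tail idx)) z -
        transverseCard (Fin.tail idx) / 2 * partialDeriv a (fun y => T y (Fin.tail idx)) z :=
    fun a => by
      simp only [hT.isBalanced.covDeriv_of_apply_zero_eq_two hQ _ idx hidx h0]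
      rw [partialDeriv_sub a (hx z) ((hT.differentiable _ z).const_mul _),
        partialDeriv_mul a (differentiableAt_const _) (hT.differentiable _ z), partialDeriv_const,
        zero_mul, zero_add]
  have hmixed : partialDeriv 3 (partialDeriv 2 fun y => T y (Fin.tail idx)) z =
      rotation z * partialDeriv 2 (partialDeriv 2 fun y => T y (Fin.tail idx)) z := by
    rw [partialDeriv_comm hcomp, ← partialDeriv_rotation_mul (hx z) (by decide)]
    exact congrArg (partialDeriv 2 · z) (funext fun y => hT.partialDeriv_three y _ htail)
  rw [hexpand, hexpand, hmixed, hT.partialDeriv_three z _ htail]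
  ring

theorem partialDeriv_three_covDeriv (hT : IsNullSelfDual T b) (hQ : IsPetrovProfile Q) (z : Pt 4)
    (idx : Fin (k + 1) → Fin 4) (hidx : boostWeight idx = b) :
    partialDeriv 3 (fun y => covDeriv (petrovMetric Q) T y idx) z =
      rotation z * partialDeriv 2 (fun y => covDeriv (petrovMetric Q) T y idx) z := by
  rcases coordWeight_ne_zero_or (idx 0) with h | h | h
  · simp [hT.isBalanced.covDeriv_eq_zero hQ _ idx hidx h]
  · exact hT.partialDeriv_three_covDeriv_of_apply_zero_eq_two hQ z idx hidx h
  · have hidx' : boostWeight (Function.update idx 0 2) = b := by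
      rw [boostWeight_update_zero_two h, hidx]
    have h2 := Function.update_self 0 2 idx
    have hsmooth := ((hT.isBalanced.covDeriv (hasBalancedConnection_petrovMetric hQ)).contDiff
      (Function.update idx 0 2)).differentiable (by simp) z
    rw [← update_zero_two_three h]
    simp only [hT.covDeriv_update_zero hQ _ _ hidx' h2]
    rw [partialDeriv_rotation_mul hsmooth (by decide),
      partialDeriv_rotation_mul hsmooth (by decide),
      hT.partialDeriv_three_covDeriv_of_apply_zero_eq_two hQ z _ hidx' h2]

theorem covDeriv (hT : IsNullSelfDual T b) (hQ : IsPetrovProfile Q) :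
    IsNullSelfDual (covDeriv (petrovMetric Q) T) b where
  isBalanced := hT.isBalanced.covDeriv (hasBalancedConnection_petrovMetric hQ)
  eq_zero_of_apply_eq_one := hT.covDeriv_eq_zero_of_apply_eq_one hQ
  update_three z idx m := by
    cases m using Fin.cases with
    | zero => exact hT.covDeriv_update_zero hQ z idx
    | succ m => exact hT.covDeriv_update_succ hQ z idx m
  partialDeriv_three := hT.partialDeriv_three_covDeriv hQ

end IsNullSelfDual

end NullSelfDualStability

section SelfDualField

variable {φ : Pt 4 → ℂ} {Q : Pt 4 → ℝ} {k : ℕ}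

/-- The null 2-form `φ du ∧ (dx + i eᵘ dy)`. -/
def selfDualNullForm (φ : Pt 4 → ℂ) : Pt 4 → (Fin 2 → Fin 4) → ℂ := fun z idx =>
  φ z * !![0, 0, 1, rotation z;
           0, 0, 0, 0;
           -1, 0, 0, 0;
           -rotation z, 0, 0, 0] (idx 0) (idx 1)

theorem contDiff_selfDualNullForm (hφ : ContDiff ℝ (⊤ : ℕ∞) φ) (idx : Fin 2 → Fin 4) :
    ContDiff ℝ (⊤ : ℕ∞) fun z => selfDualNullForm φ z idx := by
  refine hφ.mul ?_
  generalize idx 0 = i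
  generalize idx 1 = j
  fin_cases i <;> fin_cases j <;>
    first | exact contDiff_const | exact contDiff_rotation | exact contDiff_rotation.neg

theorem partialDeriv_selfDualNullForm (hφ : Differentiable ℝ φ) (a : Fin 4) (z : Pt 4)
    (idx : Fin 2 → Fin 4) :
    partialDeriv a (fun y => selfDualNullForm φ y idx) z =
      selfDualNullForm (partialDeriv a φ) z idx +
        if 0 = a then
          φ z * !![0, 0, 0, rotation z;
                   0, 0, 0, 0;
                   0, 0, 0, 0;
                   -rotation z, 0, 0, 0] (idx 0) (idx 1)
        else 0 := by
  have hrot : Differentiable ℝ rotation := contDiff_rotation.differentiable (by simp)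
  unfold selfDualNullForm
  generalize idx 0 = i
  generalize idx 1 = j
  fin_cases i <;> fin_cases j <;>
    simp (disch := fun_prop) [partialDeriv_mul, partialDeriv_neg, partialDeriv_rotation, add_comm]
  all_goals split_ifs <;> simp

theorem isNullSelfDual_selfDualNullForm (hφ : ContDiff ℝ (⊤ : ℕ∞) φ)
    (hr : ∀ z, partialDeriv 1 φ z = 0)
    (hy : ∀ z, partialDeriv 3 φ z = rotation z * partialDeriv 2 φ z) :
    IsNullSelfDual (selfDualNullForm φ) (-1) where
  isBalanced idx := by
    by_cases hidx : -1 < boostWeight idx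
    · have hzero : ∀ z, selfDualNullForm φ z idx = 0 := fun z => by
        obtain ⟨i, j, rfl⟩ : ∃ i j, idx = ![i, j] := ⟨idx 0, idx 1, List.ofFn_inj.1 rfl⟩
        revert hidx
        fin_cases i <;> fin_cases j <;> simp [selfDualNullForm, boostWeight, coordWeight]
      simpa [hzero, ← Pi.zero_def] using IsBalancedScalar.zero _
    · refine .of_partialDeriv_eq_zero (by omega) (contDiff_selfDualNullForm hφ idx) fun z => ?_
      rw [partialDeriv_selfDualNullForm (hφ.differentiable (by simp))]
      simp [selfDualNullForm, hr]
  eq_zero_of_apply_eq_one z idx m _ hm := by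
    obtain ⟨i, j, rfl⟩ : ∃ i j, idx = ![i, j] := ⟨idx 0, idx 1, List.ofFn_inj.1 rfl⟩
    revert hm
    fin_cases m <;> fin_cases i <;> fin_cases j <;> simp [selfDualNullForm]
  update_three z idx m hidx hm := by
    obtain ⟨i, j, rfl⟩ : ∃ i j, idx = ![i, j] := ⟨idx 0, idx 1, List.ofFn_inj.1 rfl⟩
    revert hidx hm
    fin_cases m <;> fin_cases i <;> fin_cases j <;>
      simp [selfDualNullForm, boostWeight, coordWeight, mul_comm]
  partialDeriv_three z idx _ := by
    rw [partialDeriv_selfDualNullForm (hφ.differentiable (by simp)),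
      partialDeriv_selfDualNullForm (hφ.differentiable (by simp)), if_neg (by decide),
      if_neg (by decide), add_zero, add_zero, selfDualNullForm, selfDualNullForm, hy, mul_assoc]

theorem IsNullSelfDual.cons_zero {T : Pt 4 → (Fin k → Fin 4) → ℂ} {b : ℤ}
    (hT : IsNullSelfDual T b) :
    IsNullSelfDual (fun z idx => if idx 0 = 0 then T z (Fin.tail idx) else 0) (b - 1) := by
  have hweight : ∀ {idx : Fin (k + 1) → Fin 4}, idx 0 = 0 → boostWeight idx = b - 1 →
      boostWeight (Fin.tail idx) = b := fun {idx} h0 hidx => by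
    rw [boostWeight_eq_add_tail, h0, show coordWeight (0 : Fin 4) = -1 from rfl] at hidx
    omega
  refine ⟨fun idx => ?_, fun z idx m hidx hm => ?_, fun z idx m hidx hm => ?_,
    fun z idx hidx => ?_⟩
  · split_ifs with h0
    · rw [boostWeight_eq_add_tail, h0, show coordWeight (0 : Fin 4) = -1 from rfl]
      exact (hT.isBalanced _).mono (by omega)
    · exact .zero _
  · split_ifs with h0
    · cases m using Fin.cases with
      | zero => simp [h0] at hm
      | succ m => exact hT.eq_zero_of_apply_eq_one z _ m (hweight h0 hidx) hm
    · rfl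
  · cases m using Fin.cases with
    | zero => simp [hm]
    | succ m =>
      rw [Function.update_of_ne (Fin.succ_ne_zero m).symm, Fin.tail_update_succ]
      split_ifs with h0
      · exact hT.update_three z _ m (hweight h0 hidx) hm
      · simp
  · by_cases h0 : idx 0 = 0
    · simpa [h0] using hT.partialDeriv_three z _ (hweight h0 hidx)
    · simp [h0]

/-- The amplitudes `φ` for which `selfDualNullForm φ` has no covariant derivative along the wave
fronts of `petrovMetric`. -/
structure IsPetrovAmplitude (φ : Pt 4 → ℂ) : Prop where
  contDiff : ContDiff ℝ (⊤ : ℕ∞) φ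
  partialDeriv_r : partialDeriv 1 φ = 0
  partialDeriv_x : partialDeriv 2 φ = fun z => 1 / 2 * φ z
  partialDeriv_y : partialDeriv 3 φ = fun z => rotation z * (1 / 2 * φ z)

namespace IsPetrovAmplitude

theorem isNullSelfDual (hφ : IsPetrovAmplitude φ) : IsNullSelfDual (selfDualNullForm φ) (-1) :=
  isNullSelfDual_selfDualNullForm hφ.contDiff (congrFun hφ.partialDeriv_r) fun z => by
    rw [hφ.partialDeriv_y, hφ.partialDeriv_x]

theorem covDeriv_selfDualNullForm (hφ : IsPetrovAmplitude φ) (hQ : IsPetrovProfile Q) :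
    covDeriv (petrovMetric Q) (selfDualNullForm φ) = fun z idx =>
      if idx 0 = 0 then
        selfDualNullForm (fun y => partialDeriv 0 φ y + y 2 / 2 * φ y) z (Fin.tail idx) else 0 := by
  funext z idx
  have hdiff : Differentiable ℝ φ := hφ.contDiff.differentiable (by simp)
  obtain ⟨a, i, j, rfl⟩ : ∃ a i j, idx = ![a, i, j] := ⟨idx 0, idx 1, idx 2, List.ofFn_inj.1 rfl⟩
  have hexp : Complex.exp (2 * z 0) = -(rotation z * rotation z) := by simp [rotation_mul_self]
  simp only [covDeriv, partialDeriv_selfDualNullForm hdiff, Fin.sum_univ_two, Fin.sum_univ_four,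
    christoffel_petrovMetric hQ]
  fin_cases a <;> fin_cases i <;> fin_cases j <;>
    simp [selfDualNullForm, petrovChristoffel, Fin.tail, hφ.partialDeriv_r,
      hφ.partialDeriv_x, hφ.partialDeriv_y, hexp]
  all_goals ring

theorem isNullSelfDual_covDeriv (hφ : IsPetrovAmplitude φ) (hQ : IsPetrovProfile Q) :
    IsNullSelfDual (covDeriv (petrovMetric Q) (selfDualNullForm φ)) (-2) := by
  have hdiff : Differentiable ℝ φ := hφ.contDiff.differentiable (by simp)
  have hcoord := contDiff_ofReal_coord 2
  have hu := contDiff_partialDeriv hφ.contDiff 0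
  have hu' : Differentiable ℝ (partialDeriv 0 φ) := hu.differentiable (by simp)
  have hφ' := hφ.contDiff
  have hexpand : ∀ a z, partialDeriv a (fun y => partialDeriv 0 φ y + y 2 / 2 * φ y) z =
      partialDeriv 0 (partialDeriv a φ) z +
        ((if 2 = a then 1 else 0) / 2 * φ z + z 2 / 2 * partialDeriv a φ z) := fun a z => by
    simp (disch := fun_prop) only [div_eq_mul_inv, partialDeriv_add, partialDeriv_mul,
      partialDeriv_const, partialDeriv_ofReal, partialDeriv_coord, partialDeriv_comm hφ.contDiff a]
    split_ifs <;> push_cast <;> ring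
  rw [hφ.covDeriv_selfDualNullForm hQ]
  refine (isNullSelfDual_selfDualNullForm (by fun_prop) (fun z => ?_) fun z => ?_).cons_zero
  · rw [hexpand, hφ.partialDeriv_r]
    simp [Pi.zero_def]
  · have hrot : Differentiable ℝ rotation := contDiff_rotation.differentiable (by simp)
    rw [hexpand, hexpand, hφ.partialDeriv_x, hφ.partialDeriv_y]
    simp (disch := fun_prop) only [partialDeriv_mul, partialDeriv_rotation, partialDeriv_const]
    simp
    ring

end IsPetrovAmplitude

/-- The amplitude of the self-dual part `-c(u) e^{(x + i y eᵘ)/2} du ∧ (dx + i eᵘ dy)` of the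
field. -/
def petrovAmplitude (c : ℝ → ℝ) (z : Pt 4) : ℂ :=
  -(c (z 0) * Complex.exp ((z 2 + z 3 * rotation z) / 2))

theorem re_selfDualNullForm_petrovAmplitude (c : ℝ → ℝ) (z : Pt 4) (idx : Fin 2 → Fin 4) :
    (selfDualNullForm (petrovAmplitude c) z idx).re = petrovF c z idx := by
  obtain ⟨i, j, rfl⟩ : ∃ i j, idx = ![i, j] := ⟨idx 0, idx 1, List.ofFn_inj.1 rfl⟩
  fin_cases i <;> fin_cases j <;>
    simp [selfDualNullForm, petrovAmplitude, petrovF, petrovA, rotation, Complex.exp_re,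
      Complex.exp_im]
  all_goals ring

theorem contDiff_petrovPhase :
    ContDiff ℝ (⊤ : ℕ∞) fun z : Pt 4 => ((z 2 : ℂ) + z 3 * rotation z) / 2 :=
  ((contDiff_ofReal_coord 2).add ((contDiff_ofReal_coord 3).mul contDiff_rotation)).div_const 2

theorem partialDeriv_petrovPhase {a : Fin 4} (ha : a ≠ 0) (z : Pt 4) :
    partialDeriv a (fun y : Pt 4 => ((y 2 : ℂ) + y 3 * rotation y) / 2) z =
      ((if 2 = a then 1 else 0) + (if 3 = a then rotation z else 0)) / 2 := by
  have hrot : Differentiable ℝ rotation := contDiff_rotation.differentiable (by simp)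
  simp (disch := fun_prop) only [div_eq_mul_inv, partialDeriv_add, partialDeriv_mul,
    partialDeriv_const, partialDeriv_ofReal, partialDeriv_coord, partialDeriv_rotation,
    if_neg ha.symm]
  split_ifs <;> simp

variable {c : ℝ → ℝ}

theorem contDiff_petrovAmplitude (hc : ContDiff ℝ (⊤ : ℕ∞) c) :
    ContDiff ℝ (⊤ : ℕ∞) (petrovAmplitude c) :=
  ((Complex.ofRealCLM.contDiff.comp (hc.comp (contDiff_apply ℝ ℝ 0))).mul
    contDiff_petrovPhase.cexp).neg

theorem partialDeriv_petrovAmplitude (hc : Differentiable ℝ c) {a : Fin 4} (ha : a ≠ 0)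
    (z : Pt 4) :
    partialDeriv a (petrovAmplitude c) z =
      ((if 2 = a then 1 else 0) + (if 3 = a then rotation z else 0)) / 2 *
        petrovAmplitude c z := by
  have hphase := contDiff_petrovPhase.differentiable (by simp) z
  have hcu : DifferentiableAt ℝ (fun y : Pt 4 => (c (y 0) : ℂ)) z := by fun_prop
  have hderiv : partialDeriv a (fun y : Pt 4 => (c (y 0) : ℂ)) z = 0 := by
    rw [partialDeriv_ofReal a (by fun_prop), partialDeriv_comp_coord hc 0 a, if_neg ha.symm,
      Complex.ofReal_zero]
  unfold petrovAmplitude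
  rw [partialDeriv_neg, partialDeriv_mul a hcu hphase.cexp, partialDeriv_cexp a hphase, hderiv,
    partialDeriv_petrovPhase ha]
  ring

theorem isPetrovAmplitude_petrovAmplitude (hc : ContDiff ℝ (⊤ : ℕ∞) c) :
    IsPetrovAmplitude (petrovAmplitude c) := by
  have hderiv {a : Fin 4} (ha : a ≠ 0) :=
    funext (partialDeriv_petrovAmplitude (hc.differentiable (by simp)) ha)
  refine ⟨contDiff_petrovAmplitude hc, ?_, ?_, ?_⟩
  · rw [hderiv (by decide)]
    simp [← Pi.zero_def]
  · rw [hderiv (by decide)]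
    simp
  · rw [hderiv (by decide)]
    simp [div_eq_inv_mul, mul_left_comm, mul_assoc]

end SelfDualField

section IteratedDerivative

variable {n k : ℕ} {g : MetricField n}

/-- Iterated covariant derivative of a tensor field with values in a normed space; `covDIter` is the
real-valued case. -/
def covDerivIter {E : Type*} [NormedAddCommGroup E] [NormedSpace ℝ E] (g : MetricField n)
    (T : Pt n → (Fin k → Fin n) → E) : (i : ℕ) → Pt n → (Fin (k + i) → Fin n) → E
  | 0 => T
  | i + 1 => covDeriv g (covDerivIter g T i)

theorem IsBalanced.covDerivIter {E : Type*} [NormedAddCommGroup E] [NormedSpace ℝ E] [NeZero n]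
    {T : Pt n → (Fin k → Fin n) → E} {b : ℤ} (hT : IsBalanced T b) (hg : HasBalancedConnection g) :
    ∀ i, IsBalanced (covDerivIter g T i) b
  | 0 => hT
  | i + 1 => (hT.covDerivIter hg i).covDeriv hg

theorem IsBalanced.coordBoostOrderLE_re [NeZero n] {T : Pt n → (Fin k → Fin n) → ℂ} {b : ℤ}
    (hT : IsBalanced T b) : CoordBoostOrderLE (fun x idx => (T x idx).re) b := fun x idx h =>
  congrArg Complex.re (hT.coordBoostOrderLE x idx h)

theorem IsBalanced.covDIter_re [NeZero n] {T : Pt n → (Fin k → Fin n) → ℂ} {b : ℤ}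
    (hT : IsBalanced T b) (hg : HasBalancedConnection g) (i : ℕ) :
    covDIter g (fun x idx => (T x idx).re) i = fun x idx => (VSI.covDerivIter g T i x idx).re := by
  induction i with
  | zero => rfl
  | succ i ih =>
    rw [covDIter, ih, covD_eq_covDeriv]
    exact covDeriv_clm_comp g Complex.reCLM fun idx =>
      ((hT.covDerivIter hg i).contDiff idx).differentiable (by simp)

theorem IsPetrovAmplitude.isNullSelfDual_covDerivIter_succ {φ : Pt 4 → ℂ} {Q : Pt 4 → ℝ}
    (hφ : IsPetrovAmplitude φ) (hQ : IsPetrovProfile Q) :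
    ∀ i, IsNullSelfDual (covDerivIter (petrovMetric Q) (selfDualNullForm φ) (i + 1)) (-2)
  | 0 => hφ.isNullSelfDual_covDeriv hQ
  | i + 1 => (hφ.isNullSelfDual_covDerivIter_succ hQ i).covDeriv hQ

variable {c : ℝ → ℝ}

theorem covDIter_petrovF (hc : ContDiff ℝ (⊤ : ℕ∞) c) {Q : Pt 4 → ℝ} (hQ : IsPetrovProfile Q)
    (i : ℕ) :
    covDIter (petrovMetric Q) (petrovF c) i = fun x idx =>
      (covDerivIter (petrovMetric Q) (selfDualNullForm (petrovAmplitude c)) i x idx).re := by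
  rw [← (isPetrovAmplitude_petrovAmplitude hc).isNullSelfDual.isBalanced.covDIter_re
    (hasBalancedConnection_petrovMetric hQ)]
  simp only [re_selfDualNullForm_petrovAmplitude]

theorem coordBoostOrderLE_covDIter_petrovF (hc : ContDiff ℝ (⊤ : ℕ∞) c) {Q : Pt 4 → ℝ}
    (hQ : IsPetrovProfile Q) (i : ℕ) :
    CoordBoostOrderLE (covDIter (petrovMetric Q) (petrovF c) i) (if i = 0 then -1 else -2) := by
  have hφ := isPetrovAmplitude_petrovAmplitude hc
  rw [covDIter_petrovF hc hQ]
  cases i with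
  | zero => exact hφ.isNullSelfDual.isBalanced.coordBoostOrderLE_re
  | succ i => exact (hφ.isNullSelfDual_covDerivIter_succ hQ i).isBalanced.coordBoostOrderLE_re

end IteratedDerivative

section SingleFactor

variable {k r : ℕ} {Q : Pt 4 → ℝ} {T : TensorField 4 k} {b : ℤ}

theorem IsNullSelfDual.update_three_update_three {V : Pt 4 → (Fin k → Fin 4) → ℂ}
    (hV : IsNullSelfDual V b) (z : Pt 4) {idx : Fin k → Fin 4} {s t : Fin k} (hst : s ≠ t)
    (hidx : boostWeight idx = b) (hs : idx s = 2) (ht : idx t = 2) :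
    V z (Function.update (Function.update idx s 3) t 3) = -Complex.exp (2 * z 0) * V z idx := by
  rw [hV.update_three z _ t (by simp [boostWeight_update, hs, hidx, coordWeight])
      (by rw [Function.update_of_ne hst.symm, ht]),
    hV.update_three z _ s hidx hs, ← mul_assoc, rotation_mul_self]

namespace ConcomScheme

/-- The contribution to a concomitant of given values `φ` of the contracted indices. -/
def summand (S : ConcomScheme k r) {n : ℕ} (g : MetricField n) (T : TensorField n k) (x : Pt n)
    (free : Fin r → Fin n) (φ : Fin S.m × Bool → Fin n) : ℝ :=
  (∏ i, (g x)⁻¹ (φ (i, false)) (φ (i, true))) *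
    ∏ j, covDIter g T (S.ord j) x (S.factorIdx φ free j)

theorem factorIdx_update {n : ℕ} (S : ConcomScheme k r) (φ : Fin S.m × Bool → Fin n)
    (free : Fin r → Fin n) {p : Fin S.m × Bool} {j : Fin S.N} {s : Fin (k + S.ord j)}
    (hs : S.slots (.inl p) = ⟨j, s⟩) (a : Fin n) :
    S.factorIdx (Function.update φ p a) free j = Function.update (S.factorIdx φ free j) s a := by
  funext t
  have hslot : S.slots.symm ⟨j, t⟩ = .inl p ↔ t = s := by
    rw [Equiv.symm_apply_eq, hs, Sigma.mk.injEq]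
    simp
  simp only [factorIdx, ← Sum.update_elim_inl, Function.update_apply, hslot]

theorem factorIdx_of_slots {n : ℕ} (S : ConcomScheme k r) (φ : Fin S.m × Bool → Fin n)
    (free : Fin r → Fin n) {p : Fin S.m × Bool} {j : Fin S.N} {s : Fin (k + S.ord j)}
    (hs : S.slots (.inl p) = ⟨j, s⟩) : S.factorIdx φ free j s = φ p := by
  rw [factorIdx, ← hs, Equiv.symm_apply_apply, Sum.elim_inl]

theorem exists_slots_eq (S : ConcomScheme k r) [Subsingleton (Fin S.N)] (j : Fin S.N)
    (p : Fin S.m × Bool) : ∃ s, S.slots (.inl p) = ⟨j, s⟩ := by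
  obtain ⟨j', s⟩ := S.slots (.inl p)
  obtain rfl := Subsingleton.elim j' j
  exact ⟨s, rfl⟩

theorem summand_eq_zero_of_boostWeight_ne (S : ConcomScheme k r) [Subsingleton (Fin S.N)]
    {n : ℕ} {g : MetricField n} {T : TensorField n k} (hg : HasBalancedInverse g) {j : Fin S.N}
    (hT : CoordBoostOrderLE (covDIter g T (S.ord j)) b) (x : Pt n) {free : Fin r → Fin n}
    (hfree : b ≤ boostWeight free) {φ : Fin S.m × Bool → Fin n}
    (hφ : boostWeight (S.factorIdx φ free j) ≠ b) : S.summand g T x free φ = 0 := by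
  have hsum := S.sum_boostWeight_factorIdx φ free
  rw [Fintype.sum_subsingleton _ j] at hsum
  rw [summand, Fintype.prod_subsingleton _ j]
  rcases hφ.lt_or_gt with h | h
  · obtain ⟨i, hi, hneg⟩ := Finset.exists_lt_of_sum_lt (s := Finset.univ) (g := 0)
      (f := fun i => coordWeight (φ (i, false)) + coordWeight (φ (i, true))) (by simp; omega)
    exact mul_eq_zero_of_left (Finset.prod_eq_zero hi (hg x _ _ hneg)) _
  · exact mul_eq_zero_of_right _ (hT x _ h)

end ConcomScheme

/-- Interchange of `x` and `y` in both indices of the `i`-th contracted pair. -/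
def swapTransverse {m : ℕ} (i : Fin m) : Equiv.Perm (Fin m × Bool → Fin 4) :=
  Equiv.piCongrRight fun p => if p.1 = i then Equiv.swap 2 3 else Equiv.refl _

theorem swapTransverse_apply {m : ℕ} (i : Fin m) (φ : Fin m × Bool → Fin 4) (p : Fin m × Bool) :
    swapTransverse i φ p = if p.1 = i then Equiv.swap 2 3 (φ p) else φ p := by
  simp only [swapTransverse, Equiv.piCongrRight_apply, Pi.map_apply]
  split_ifs <;> rfl

theorem swapTransverse_swapTransverse {m : ℕ} (i : Fin m) (φ : Fin m × Bool → Fin 4) :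
    swapTransverse i (swapTransverse i φ) = φ := by
  funext p
  simp only [swapTransverse_apply]
  split_ifs <;> simp

theorem swapTransverse_eq_update {m : ℕ} {i : Fin m} {φ : Fin m × Bool → Fin 4}
    (hf : φ (i, false) = 2) (ht : φ (i, true) = 2) :
    swapTransverse i φ = Function.update (Function.update φ (i, false) 3) (i, true) 3 := by
  funext p
  obtain ⟨l, _ | _⟩ := p <;> by_cases hl : l = i <;>
    simp [swapTransverse_apply, hl, hf, ht]

theorem prod_inv_swapTransverse {m : ℕ} (x : Pt 4) {i : Fin m} {φ : Fin m × Bool → Fin 4}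
    (hf : φ (i, false) = 2) (ht : φ (i, true) = 2) :
    ∏ l, (petrovMetric Q x)⁻¹ (φ (l, false)) (φ (l, true)) = Real.exp (2 * x 0) *
      ∏ l, (petrovMetric Q x)⁻¹ (swapTransverse i φ (l, false)) (swapTransverse i φ (l, true)) := by
  rw [← Finset.mul_prod_erase _ _ (Finset.mem_univ i),
    ← Finset.mul_prod_erase (M := ℝ) _ _ (Finset.mem_univ i), ← mul_assoc]
  congr 1
  · simp [swapTransverse_apply, hf, ht, petrovMetric_inv, ← Real.exp_add]
  · refine Finset.prod_congr rfl fun l hl => ?_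
    simp [swapTransverse_apply, Finset.ne_of_mem_erase hl]

namespace ConcomScheme

theorem summand_eq_zero_of_ne_transverse (S : ConcomScheme k r) [Subsingleton (Fin S.N)]
    {j : Fin S.N} {V : Pt 4 → (Fin (k + S.ord j) → Fin 4) → ℂ} (hV : IsNullSelfDual V b)
    (hTV : covDIter (petrovMetric Q) T (S.ord j) = fun x idx => (V x idx).re) (x : Pt 4)
    {free : Fin r → Fin 4} (hfree : b ≤ boostWeight free) {φ : Fin S.m × Bool → Fin 4} (i : Fin S.m)
    (hxx : ¬(φ (i, false) = 2 ∧ φ (i, true) = 2)) (hyy : ¬(φ (i, false) = 3 ∧ φ (i, true) = 3)) :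
    S.summand (petrovMetric Q) T x free φ = 0 := by
  by_cases hweight : boostWeight (S.factorIdx φ free j) = b
  swap
  · exact S.summand_eq_zero_of_boostWeight_ne (hasBalancedInverse_petrovMetric Q)
      (hTV ▸ hV.isBalanced.coordBoostOrderLE_re) x hfree hweight
  by_cases hinv : (petrovMetric Q x)⁻¹ (φ (i, false)) (φ (i, true)) = 0
  · exact mul_eq_zero_of_left (Finset.prod_eq_zero (Finset.mem_univ i) hinv) _
  obtain ⟨p, hp⟩ : ∃ p, φ p = 1 := by
    suffices φ (i, false) = 1 ∨ φ (i, true) = 1 from this.elim (⟨_, ·⟩) (⟨_, ·⟩)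
    revert hxx hyy hinv
    generalize φ (i, false) = a
    generalize φ (i, true) = c
    rw [petrovMetric_inv]
    fin_cases a <;> fin_cases c <;> simp
  obtain ⟨s, hs⟩ := S.exists_slots_eq j p
  refine mul_eq_zero_of_right _ (Finset.prod_eq_zero (Finset.mem_univ j) ?_)
  rw [hTV]
  exact congrArg Complex.re
    (hV.eq_zero_of_apply_eq_one x _ s hweight (by rw [S.factorIdx_of_slots φ free hs, hp]))

theorem summand_swapTransverse_of_eq_two (S : ConcomScheme k r) [Subsingleton (Fin S.N)]
    {j : Fin S.N} {V : Pt 4 → (Fin (k + S.ord j) → Fin 4) → ℂ} (hV : IsNullSelfDual V b)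
    (hTV : covDIter (petrovMetric Q) T (S.ord j) = fun x idx => (V x idx).re) (x : Pt 4)
    {free : Fin r → Fin 4} (hfree : b ≤ boostWeight free) {φ : Fin S.m × Bool → Fin 4} {i : Fin S.m}
    (hf : φ (i, false) = 2) (ht : φ (i, true) = 2) :
    S.summand (petrovMetric Q) T x free (swapTransverse i φ) =
      -S.summand (petrovMetric Q) T x free φ := by
  obtain ⟨s, hs⟩ := S.exists_slots_eq j (i, false)
  obtain ⟨t, ht'⟩ := S.exists_slots_eq j (i, true)
  have hst : s ≠ t := by
    rintro rfl
    simpa using S.slots.injective (hs.trans ht'.symm)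
  have hs2 := (S.factorIdx_of_slots φ free hs).trans hf
  have ht2 := (S.factorIdx_of_slots φ free ht').trans ht
  have hidx : S.factorIdx (swapTransverse i φ) free j =
      Function.update (Function.update (S.factorIdx φ free j) s 3) t 3 := by
    rw [swapTransverse_eq_update hf ht, S.factorIdx_update _ free ht', S.factorIdx_update φ free hs]
  by_cases hweight : boostWeight (S.factorIdx φ free j) = b
  · have hre : -Complex.exp (2 * x 0) = (-Real.exp (2 * x 0) : ℝ) := by push_cast; rfl
    simp only [summand, Fintype.prod_subsingleton _ j, hidx, hTV, prod_inv_swapTransverse x hf ht,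
      hV.update_three_update_three x hst hweight hs2 ht2, hre, Complex.re_ofReal_mul]
    ring
  · have hzero := fun φ => S.summand_eq_zero_of_boostWeight_ne (φ := φ)
      (hasBalancedInverse_petrovMetric Q) (hTV ▸ hV.isBalanced.coordBoostOrderLE_re) x hfree
    rw [hzero _ hweight, hzero _ ?_, neg_zero]
    simpa [hidx, boostWeight_update, Function.update_of_ne hst.symm, hs2, ht2, coordWeight]

theorem summand_swapTransverse (S : ConcomScheme k r) [Subsingleton (Fin S.N)]
    {j : Fin S.N} {V : Pt 4 → (Fin (k + S.ord j) → Fin 4) → ℂ} (hV : IsNullSelfDual V b)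
    (hTV : covDIter (petrovMetric Q) T (S.ord j) = fun x idx => (V x idx).re) (x : Pt 4)
    {free : Fin r → Fin 4} (hfree : b ≤ boostWeight free) (i : Fin S.m)
    (φ : Fin S.m × Bool → Fin 4) :
    S.summand (petrovMetric Q) T x free (swapTransverse i φ) =
      -S.summand (petrovMetric Q) T x free φ := by
  by_cases hxx : φ (i, false) = 2 ∧ φ (i, true) = 2
  · exact S.summand_swapTransverse_of_eq_two hV hTV x hfree hxx.1 hxx.2
  by_cases hyy : φ (i, false) = 3 ∧ φ (i, true) = 3
  · have h := S.summand_swapTransverse_of_eq_two hV hTV x hfree (φ := swapTransverse i φ) (i := i)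
      (by simp [swapTransverse_apply, hyy.1]) (by simp [swapTransverse_apply, hyy.2])
    rw [swapTransverse_swapTransverse] at h
    rw [h, neg_neg]
  · have hswap : ∀ a : Fin 4, (Equiv.swap 2 3 a = 2 ↔ a = 3) ∧ (Equiv.swap 2 3 a = 3 ↔ a = 2) := by
      decide
    rw [S.summand_eq_zero_of_ne_transverse hV hTV x hfree i hxx hyy,
      S.summand_eq_zero_of_ne_transverse hV hTV x hfree i, neg_zero]
    · simpa [swapTransverse_apply, hswap] using hyy
    · simpa [swapTransverse_apply, hswap] using hxx

-- Interchanging `x` and `y` in a contracted pair maps each summand to its negative.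
theorem value_eq_zero_of_isNullSelfDual (S : ConcomScheme k r) [Subsingleton (Fin S.N)]
    {j : Fin S.N} {V : Pt 4 → (Fin (k + S.ord j) → Fin 4) → ℂ} (hV : IsNullSelfDual V b)
    (hTV : covDIter (petrovMetric Q) T (S.ord j) = fun x idx => (V x idx).re) (x : Pt 4)
    {free : Fin r → Fin 4} (hfree : b ≤ boostWeight free) (hm : 0 < S.m) :
    S.value (petrovMetric Q) T x free = 0 := by
  refine CharZero.eq_neg_self_iff.1 ?_
  change ∑ φ, S.summand (petrovMetric Q) T x free φ = -∑ φ, S.summand (petrovMetric Q) T x free φ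
  rw [← Finset.sum_neg_distrib, ← Equiv.sum_comp (swapTransverse ⟨0, hm⟩)]
  exact Finset.sum_congr rfl fun φ _ => S.summand_swapTransverse hV hTV x hfree _ φ

end ConcomScheme

end SingleFactor

section Universality

namespace ConcomScheme

variable {k r : ℕ}

theorem two_mul_add_eq_sum (S : ConcomScheme k r) : 2 * S.m + r = ∑ j, (k + S.ord j) := by
  simpa [mul_comm 2] using Fintype.card_congr S.slots

theorem exists_value_eq_comp_perm (S : ConcomScheme k k) (hN : S.N = 1) (hord : ∀ j, S.ord j = 0)
    {n : ℕ} (g : MetricField n) (T : TensorField n k) :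
    ∃ σ : Equiv.Perm (Fin k), ∀ x free, S.value g T x free = T x (free ∘ σ) := by
  have hm := S.two_mul_add_eq_sum
  obtain ⟨N, hpos, ord, m, slots⟩ := S
  obtain rfl : N = 1 := hN
  obtain rfl : ord = fun _ => 0 := funext hord
  obtain rfl : m = 0 := by simpa using hm
  refine ⟨(Equiv.uniqueSigma fun _ : Fin 1 => Fin k).symm.trans
    (slots.symm.trans (Equiv.emptySum (Fin 0 × Bool) (Fin k))), fun x free => ?_⟩
  have hfree : ∀ φ, Sum.elim φ free = free ∘ Equiv.emptySum (Fin 0 × Bool) (Fin k) := fun φ => by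
    funext p
    obtain p | p := p
    · exact p.1.elim0
    · rfl
  simp only [value, Finset.univ_unique, Finset.sum_singleton, Finset.univ_eq_empty,
    Finset.prod_empty, Finset.prod_singleton, one_mul, hfree]
  rfl

end ConcomScheme

variable {r : ℕ} {c : ℝ → ℝ} {Q : Pt 4 → ℝ}

theorem IsAlternating.apply_eq_zero_of_eq {n k : ℕ} {G : TensorField n k} (hG : IsAlternating G)
    (x : Pt n) {idx : Fin k → Fin n} {i j : Fin k} (hij : i ≠ j) (h : idx i = idx j) :
    G x idx = 0 := by
  have hswap := hG x idx (Equiv.swap i j)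
  rw [Equiv.Perm.sign_swap hij, Equiv.comp_swap_eq_update, h, Function.update_eq_self, ← h,
    Function.update_eq_self] at hswap
  simpa [self_eq_neg] using hswap

theorem isAlternating_petrovF (c : ℝ → ℝ) : IsAlternating (petrovF c) := by
  intro x idx σ
  have hσ : ∀ σ : Equiv.Perm (Fin 2), σ = 1 ∨ σ = Equiv.swap 0 1 := by decide
  obtain rfl | rfl := hσ σ
  · simp
  · simp [petrovF]

namespace ConcomScheme

theorem value_petrovF_eq_zero_of_lt (S : ConcomScheme 2 r) (hc : ContDiff ℝ (⊤ : ℕ∞) c)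
    (hQ : IsPetrovProfile Q) (x : Pt 4) {free : Fin r → Fin 4}
    (h : ∑ j, (if S.ord j = 0 then -1 else -2) < boostWeight free) :
    S.value (petrovMetric Q) (petrovF c) x free = 0 :=
  S.value_eq_zero_of_lt (hasBalancedInverse_petrovMetric Q)
    (fun _ => coordBoostOrderLE_covDIter_petrovF hc hQ _) x free h

theorem value_petrovF_eq_zero_of_ord_pos (S : ConcomScheme 2 2) (hN : S.N = 1)
    (hc : ContDiff ℝ (⊤ : ℕ∞) c) (hQ : IsPetrovProfile Q) {j : Fin S.N} (hj : 1 ≤ S.ord j) :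
    S.value (petrovMetric Q) (petrovF c) = 0 := by
  have : Subsingleton (Fin S.N) := by rw [hN]; infer_instance
  have hm := S.two_mul_add_eq_sum
  rw [Fintype.sum_subsingleton _ j] at hm
  obtain ⟨i, hi⟩ := Nat.exists_eq_add_of_le' hj
  have hV := (isPetrovAmplitude_petrovAmplitude hc).isNullSelfDual_covDerivIter_succ hQ i
  rw [← hi] at hV
  funext x free
  exact S.value_eq_zero_of_isNullSelfDual hV (covDIter_petrovF hc hQ _) x (neg_le_boostWeight free)
    (by omega)

theorem sum_boostOrder_le (S : ConcomScheme 2 r) :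
    ∑ j, (if S.ord j = 0 then -1 else -2 : ℤ) ≤ -S.N := by
  calc ∑ j, (if S.ord j = 0 then -1 else -2 : ℤ)
      ≤ ∑ _j : Fin S.N, (-1 : ℤ) := Finset.sum_le_sum fun j _ => by split_ifs <;> simp
    _ = -S.N := by simp

theorem sum_boostOrder_lt (S : ConcomScheme 2 r) {j : Fin S.N} (hj : 1 ≤ S.ord j) :
    ∑ j, (if S.ord j = 0 then -1 else -2 : ℤ) < -S.N := by
  calc ∑ j, (if S.ord j = 0 then -1 else -2 : ℤ)
      < ∑ _j : Fin S.N, (-1 : ℤ) :=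
        Finset.sum_lt_sum (fun j _ => by split_ifs <;> simp)
          ⟨j, Finset.mem_univ j, by rw [if_neg (by omega)]; simp⟩
    _ = -S.N := by simp

theorem value_petrovF_eq_zero_of_isCorrection (S : ConcomScheme 2 2) (hc : ContDiff ℝ (⊤ : ℕ∞) c)
    (hQ : IsPetrovProfile Q) (hS : 3 ≤ S.N ∨ ∃ j, 1 ≤ S.ord j) :
    S.value (petrovMetric Q) (petrovF c) = 0 := by
  by_cases hN : S.N = 1
  · obtain ⟨j, hj⟩ := hS.resolve_left (by omega)
    exact S.value_petrovF_eq_zero_of_ord_pos hN hc hQ hj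
  · funext x free
    refine S.value_petrovF_eq_zero_of_lt hc hQ x ?_
    have hfree := neg_le_boostWeight free
    have hpos := S.hN
    rcases hS with h3 | ⟨j, hj⟩
    · have := S.sum_boostOrder_le
      omega
    · have := S.sum_boostOrder_lt hj
      omega

theorem exists_value_petrovF_eq_mul (S : ConcomScheme 2 2) (hc : ContDiff ℝ (⊤ : ℕ∞) c)
    (hQ : IsPetrovProfile Q) :
    ∃ a : ℝ, ∀ x free, boostWeight free ≠ -2 →
      S.value (petrovMetric Q) (petrovF c) x free = a * petrovF c x free := by
  by_cases hN : S.N = 1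
  · by_cases hord : ∀ j, S.ord j = 0
    · obtain ⟨σ, hσ⟩ := S.exists_value_eq_comp_perm hN hord (petrovMetric Q) (petrovF c)
      exact ⟨_, fun x free _ => (hσ x free).trans (isAlternating_petrovF c x free σ)⟩
    · obtain ⟨j, hj⟩ := not_forall.1 hord
      exact ⟨0, fun x free _ => by
        simp [S.value_petrovF_eq_zero_of_ord_pos hN hc hQ (Nat.one_le_iff_ne_zero.2 hj)]⟩
  · refine ⟨0, fun x free hne => ?_⟩
    rw [zero_mul]
    refine S.value_petrovF_eq_zero_of_lt hc hQ x ?_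
    have hfree := neg_le_boostWeight free
    have hsum := S.sum_boostOrder_le
    have hpos := S.hN
    omega

end ConcomScheme

theorem IsCorrectionTensor.eq_zero {Tc : TensorField 4 2} (hc : ContDiff ℝ (⊤ : ℕ∞) c)
    (hQ : IsPetrovProfile Q) (h : IsCorrectionTensor (petrovMetric Q) (petrovF c) Tc) :
    Tc = 0 := by
  rw [IsCorrectionTensor, ← Submodule.mem_bot ℝ] at *
  refine Submodule.span_le.2 ?_ h
  rintro _ ⟨S, hS, rfl⟩
  exact S.value_petrovF_eq_zero_of_isCorrection hc hQ hS

theorem IsConstructedFrom.exists_eq_mul_petrovF {G : TensorField 4 2} (hc : ContDiff ℝ (⊤ : ℕ∞) c)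
    (hQ : IsPetrovProfile Q) (hG : IsConstructedFrom (petrovMetric Q) (petrovF c) G) :
    ∃ a : ℝ, ∀ x idx, boostWeight idx ≠ -2 → G x idx = a * petrovF c x idx := by
  rw [IsConstructedFrom] at hG
  induction hG using Submodule.span_induction with
  | mem _ hmem =>
    obtain ⟨S, rfl⟩ := hmem
    exact S.exists_value_petrovF_eq_mul hc hQ
  | zero => exact ⟨0, by simp⟩
  | add _ _ _ _ h₁ h₂ =>
    obtain ⟨a₁, h₁⟩ := h₁
    obtain ⟨a₂, h₂⟩ := h₂
    exact ⟨a₁ + a₂, fun x idx hidx => by simp [h₁ x idx hidx, h₂ x idx hidx, add_mul]⟩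
  | smul t _ _ h =>
    obtain ⟨a, h⟩ := h
    exact ⟨t * a, fun x idx hidx => by simp [h x idx hidx, mul_assoc]⟩

theorem IsConstructedFrom.exists_eq_petrovF {G : TensorField 4 2} (hc : ContDiff ℝ (⊤ : ℕ∞) c)
    (hQ : IsPetrovProfile Q) (hG : IsConstructedFrom (petrovMetric Q) (petrovF c) G)
    (halt : IsAlternating G) : ∃ a : ℝ, G = petrovF fun u => a * c u := by
  obtain ⟨a, ha⟩ := hG.exists_eq_mul_petrovF hc hQ
  refine ⟨a, funext₂ fun x idx => ?_⟩
  by_cases hidx : boostWeight idx = -2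
  · have heq : idx 0 = idx 1 := Fin.ext <| by
      rw [boostWeight_eq_neg_iff.1 hidx 0, boostWeight_eq_neg_iff.1 hidx 1]
    rw [halt.apply_eq_zero_of_eq x zero_ne_one heq,
      (isAlternating_petrovF _).apply_eq_zero_of_eq x zero_ne_one heq]
  · rw [ha x idx hidx]
    simp only [petrovF, petrovA]
    split_ifs <;> ring

theorem IsConstructedFrom.extD_hodge_eq_zero {G : TensorField 4 2} (h : 2 + 2 = 4)
    (hc : ContDiff ℝ (⊤ : ℕ∞) c) (hQ : IsPetrovProfile Q)
    (hG : IsConstructedFrom (petrovMetric Q) (petrovF c) G) (halt : IsAlternating G) (x : Pt 4)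
    (idx : Fin 3 → Fin 4) : extD (hodge h (petrovMetric Q) G) x idx = 0 := by
  obtain ⟨a, rfl⟩ := hG.exists_eq_petrovF hc hQ halt
  exact (maxwellEqs_petrovF h ((hc.differentiable (by simp)).const_mul a) Q).2 x idx

end Universality

/-- the backreacted Petrov metric together with the null Maxwell
2-form `F` is an exact Einstein–Maxwell solution of Weyl type III, and it remains an
exact solution of Einstein gravity coupled to any generalized electrodynamics. -/
theorem petrovEM_exact_solution (κ₀ : ℝ) (c : ℝ → ℝ) (hc : ContDiff ℝ (⊤ : ℕ∞) c) :
    MaxwellEqs (by norm_num : 2 + 2 = 4) (petrovEM κ₀ c) (petrovF c) ∧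
    (∀ (x : Pt 4) (a b : Fin 4),
      ricci (petrovEM κ₀ c) x a b
        - (1/2) * ricciScalar (petrovEM κ₀ c) x * (petrovEM κ₀ c) x a b
        = κ₀ * emTensor (petrovEM κ₀ c) (petrovF c) x a b) ∧
    BoostOrderLE (petrovEM κ₀ c) ellR (weyl (petrovEM κ₀ c)) (-1) ∧
    (∀ G : TensorField 4 2,
      IsConstructedFrom (petrovEM κ₀ c) (petrovF c) G → IsAlternating G →
      ∀ x idx, extD (hodge (by norm_num : 2 + 2 = 4) (petrovEM κ₀ c) G) x idx = 0) ∧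
    (∀ Tc : TensorField 4 2, IsCorrectionTensor (petrovEM κ₀ c) (petrovF c) Tc →
      ∀ (x : Pt 4) (a b : Fin 4),
        ricci (petrovEM κ₀ c) x a b
          - (1/2) * ricciScalar (petrovEM κ₀ c) x * (petrovEM κ₀ c) x a b
          = κ₀ * (emTensor (petrovEM κ₀ c) (petrovF c) x a b + Tc x ![a, b])) := by
  have hQ := isPetrovProfile_petrovProfile hc κ₀
  refine ⟨?_, einstein_petrovEM hc κ₀, boostOrderLE_weyl_petrovEM hc κ₀, fun G hG halt => ?_,
    fun Tc hTc x a b => ?_⟩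
  · rw [petrovEM_eq_petrovMetric]
    exact maxwellEqs_petrovF _ (hc.differentiable (by simp)) _
  · rw [petrovEM_eq_petrovMetric] at hG ⊢
    exact hG.extD_hodge_eq_zero _ hc hQ halt
  · rw [petrovEM_eq_petrovMetric] at hTc
    rw [einstein_petrovEM hc κ₀, hTc.eq_zero hc hQ, Pi.zero_apply, Pi.zero_apply, add_zero]

end VSI
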